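/- arXiv:1708.03924 — 4 statements merged into one kernel-verified Lean document; each statement's English description precedes it below -/
import Mathlib

section
/- Let g be a continuous complex-valued function on the closed unit disk with ‖g‖_∞ = sup_{z∈𝔻}|g(z)| < ∞, and let ψ ∈ L¹(𝕋) be a bounded integrable function on the unit circle. If f : 𝔻 → ℂ satisfies f(z) = P_ψ(z) − G_g(z) for all z ∈ 𝔻 (equivalently, f is twice continuously differentiable with Δf = g in 𝔻 and boundary values ψ), then for every z ∈ 𝔻 one has |f(z) − ((1−|z|²)/(1+|z|²))·(1/(2π))∫₀^{2π} ψ(e^{it}) dt| ≤ (4‖P_ψ‖_∞/π)·arctan|z| + (‖g‖_∞/4)·(1−|z|²), where ‖P_ψ‖_∞ = sup_{z∈𝔻}|P_ψ(z)|. -/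
open Metric MeasureTheory Set Filter

noncomputable section

/-- The Wirtinger derivative `∂f/∂z = (f_x - i f_y)/2`. -/
def wdz (f : ℂ → ℂ) (z : ℂ) : ℂ :=
  (fderiv ℝ f z 1 - Complex.I * fderiv ℝ f z Complex.I) / 2

/-- The Wirtinger derivative `∂f/∂z̄ = (f_x + i f_y)/2`. -/
def wdzbar (f : ℂ → ℂ) (z : ℂ) : ℂ :=
  (fderiv ℝ f z 1 + Complex.I * fderiv ℝ f z Complex.I) / 2

/-- The Laplacian `Δf = f_xx + f_yy` (equivalently `4 f_{z z̄}`). -/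
def lap (f : ℂ → ℂ) (z : ℂ) : ℂ :=
  fderiv ℝ (fun w => fderiv ℝ f w 1) z 1 +
    fderiv ℝ (fun w => fderiv ℝ f w Complex.I) z Complex.I

/-- The Poisson integral `P_ψ(z) = (1/2π) ∫₀^{2π} ((1-|z|²)/|1-z e^{-it}|²) ψ(e^{it}) dt`. -/
def poissonIntegral (ψ : ℂ → ℂ) (z : ℂ) : ℂ :=
  (1 / (2 * Real.pi) : ℝ) • ∫ t in (0:ℝ)..(2 * Real.pi),
    (((1 - ‖z‖ ^ 2) / ‖1 - z * Complex.exp (-(Complex.I * (t : ℂ)))‖ ^ 2 : ℝ) : ℂ) *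
      ψ (Complex.exp (Complex.I * (t : ℂ)))

/-- The Green potential `G_g(z) = (1/2π) ∫_𝔻 log|(1 - z w̄)/(z - w)| g(w) dA(w)`. -/
def greenPotential (g : ℂ → ℂ) (z : ℂ) : ℂ :=
  (1 / (2 * Real.pi) : ℝ) • ∫ w in ball (0:ℂ) 1,
    ((Real.log ‖(1 - z * (starRingEnd ℂ) w) / (z - w)‖ : ℝ) : ℂ) * g w

/-- `sup_{z ∈ 𝔻} |g(z)|`. -/
def supD (g : ℂ → ℂ) : ℝ := sSup ((fun z => ‖g z‖) '' ball (0:ℂ) 1)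

/-- The function `μ(r)` with constant `c` in place of `‖g‖_∞`. -/
def mu (c r : ℝ) : ℝ :=
  c * (1 - r ^ 2) / (8 * r ^ 2) *
    ((1 + r ^ 2) / (1 - r ^ 2) - (1 - r ^ 2) / (2 * r) * Real.log ((1 + r) / (1 - r)))

/-
Let `F` be harmonic on the ball of centre `c` and radius `R`, bounded by `M`, and put `r = |z - c|`.
For every constant `k`, `F z - k F c` is the mean of `(P z - k) F` over the circle, `P z` being the
Poisson kernel. The best `k` is the median value `(R² - r²) / (R² + r²)` of the kernel, taken at a
right angle to `z - c`: then `P z - k` has the sign of the cosine, so its `L¹` mean is explicitly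
`(4 / π) arctan (r / R)`. As `F` need not extend to the boundary, this is done on smaller circles.

The Green function is nonnegative on the disk, and by Jensen's formula its mean over `|w| = s` is
`-log (max s |z|)`; integrating over `s` in polar coordinates bounds the potential.
-/

section

open Real InnerProductSpace
open scoped ComplexConjugate Topology

section PolarKernel

variable {q : ℝ}

/-- The Poisson kernel `(1 - |z|²) / |1 - z e^{-iφ}|²` of the unit disk, as a function of `q = |z|`
and of the angle `t` between `z` and the boundary point `e^{iφ}`. -/
def polarPoissonKernel (q t : ℝ) : ℝ :=
  (1 - q ^ 2) / (1 + q ^ 2 - 2 * q * cos t)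

lemma one_sub_mul_cos_pos (hq : |q| < 1) (t : ℝ) : 0 < 1 - q * cos t := by
  have : |q * cos t| < 1 := by
    rw [abs_mul]
    exact mul_lt_one_of_nonneg_of_lt_one_left (abs_nonneg q) hq (abs_cos_le_one t)
  linarith [le_abs_self (q * cos t)]

lemma one_add_sq_sub_mul_cos_pos (hq : |q| < 1) (t : ℝ) : 0 < 1 + q ^ 2 - 2 * q * cos t := by
  have : 1 + q ^ 2 - 2 * q * cos t = (1 - q * cos t) ^ 2 + (q * sin t) ^ 2 := by
    linear_combination (-q ^ 2) * sin_sq_add_cos_sq t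
  rw [this]
  have := one_sub_mul_cos_pos hq t
  positivity

lemma continuous_polarPoissonKernel (hq : |q| < 1) : Continuous (polarPoissonKernel q) :=
  Continuous.div (by fun_prop) (by fun_prop) fun t => (one_add_sq_sub_mul_cos_pos hq t).ne'

-- The kernel is the real part of `(1 + q e^{it}) / (1 - q e^{it})`, so that a primitive is
-- `t - 2 arg (1 - q e^{it})`.
lemma hasDerivAt_polarPoissonKernel_primitive (hq : |q| < 1) (t : ℝ) :
    HasDerivAt (fun t => t + 2 * arctan (q * sin t / (1 - q * cos t))) (polarPoissonKernel q t)
      t := by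
  have hnum := one_sub_mul_cos_pos hq t
  have hden := one_add_sq_sub_mul_cos_pos hq t
  have htan : HasDerivAt (fun t => q * sin t / (1 - q * cos t))
      ((q * cos t * (1 - q * cos t) - q * sin t * -(q * -sin t)) / (1 - q * cos t) ^ 2) t :=
    ((hasDerivAt_sin t).const_mul q).div (((hasDerivAt_cos t).const_mul q).const_sub 1) hnum.ne'
  have hsec : 1 + (q * sin t / (1 - q * cos t)) ^ 2
      = (1 + q ^ 2 - 2 * q * cos t) / (1 - q * cos t) ^ 2 := by
    field_simp
    linear_combination q ^ 2 * sin_sq_add_cos_sq t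
  refine ((hasDerivAt_id t).add (htan.arctan.const_mul 2)).congr_deriv ?_
  rw [hsec, polarPoissonKernel]
  field_simp
  linear_combination (-2 * q ^ 2) * sin_sq_add_cos_sq t

lemma integral_polarPoissonKernel (hq : |q| < 1) (a b : ℝ) :
    ∫ t in a..b, polarPoissonKernel q t =
      (b + 2 * arctan (q * sin b / (1 - q * cos b))) -
        (a + 2 * arctan (q * sin a / (1 - q * cos a))) :=
  intervalIntegral.integral_eq_sub_of_hasDerivAt
    (fun t _ => hasDerivAt_polarPoissonKernel_primitive hq t)
    ((continuous_polarPoissonKernel hq).intervalIntegrable _ _)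

lemma polarPoissonKernel_pi_div_two_le (hq₀ : 0 ≤ q) (hq : q < 1) {t : ℝ} (ht : 0 ≤ cos t) :
    polarPoissonKernel q (π / 2) ≤ polarPoissonKernel q t := by
  have hq' : |q| < 1 := by rwa [abs_of_nonneg hq₀]
  have hnum : 0 ≤ 1 - q ^ 2 := by nlinarith
  have := one_add_sq_sub_mul_cos_pos hq' t
  unfold polarPoissonKernel
  gcongr
  simpa using ht

lemma polarPoissonKernel_le_pi_div_two (hq₀ : 0 ≤ q) (hq : q < 1) {t : ℝ} (ht : cos t ≤ 0) :
    polarPoissonKernel q t ≤ polarPoissonKernel q (π / 2) := by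
  have hq' : |q| < 1 := by rwa [abs_of_nonneg hq₀]
  have hnum : 0 ≤ 1 - q ^ 2 := by nlinarith
  have := one_add_sq_sub_mul_cos_pos hq' (π / 2)
  unfold polarPoissonKernel
  gcongr
  simpa using ht

lemma integral_abs_polarPoissonKernel_sub_right_half (hq₀ : 0 ≤ q) (hq : q < 1) :
    ∫ t in (-(π / 2))..(π / 2), |polarPoissonKernel q t - polarPoissonKernel q (π / 2)| =
      π + 4 * arctan q - π * polarPoissonKernel q (π / 2) := by
  have hq' : |q| < 1 := by rwa [abs_of_nonneg hq₀]
  have habs : EqOn (fun t => |polarPoissonKernel q t - polarPoissonKernel q (π / 2)|)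
      (fun t => polarPoissonKernel q t - polarPoissonKernel q (π / 2))
      (uIcc (-(π / 2)) (π / 2)) := by
    intro t ht
    rw [uIcc_of_le (by linarith [pi_pos])] at ht
    exact abs_of_nonneg
      (sub_nonneg.2 (polarPoissonKernel_pi_div_two_le hq₀ hq (cos_nonneg_of_mem_Icc ht)))
  rw [intervalIntegral.integral_congr habs, intervalIntegral.integral_sub
    ((continuous_polarPoissonKernel hq').intervalIntegrable _ _) intervalIntegrable_const,
    integral_polarPoissonKernel hq', intervalIntegral.integral_const]
  simp only [sin_pi_div_two, cos_pi_div_two, sin_neg, cos_neg, mul_one, mul_zero, sub_zero, div_one,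
    mul_neg, arctan_neg, smul_eq_mul]
  ring

lemma integral_abs_polarPoissonKernel_sub_left_half (hq₀ : 0 ≤ q) (hq : q < 1) :
    ∫ t in (π / 2)..(π / 2 + π), |polarPoissonKernel q t - polarPoissonKernel q (π / 2)| =
      π * polarPoissonKernel q (π / 2) - (π - 4 * arctan q) := by
  have hq' : |q| < 1 := by rwa [abs_of_nonneg hq₀]
  have habs : EqOn (fun t => |polarPoissonKernel q t - polarPoissonKernel q (π / 2)|)
      (fun t => polarPoissonKernel q (π / 2) - polarPoissonKernel q t)
      (uIcc (π / 2) (π / 2 + π)) := by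
    intro t ht
    rw [uIcc_of_le (by linarith [pi_pos])] at ht
    have hcos : cos t ≤ 0 := cos_nonpos_of_pi_div_two_le_of_le ht.1 (by linarith [ht.2])
    simp only [abs_sub_comm (polarPoissonKernel q t)]
    exact abs_of_nonneg (sub_nonneg.2 (polarPoissonKernel_le_pi_div_two hq₀ hq hcos))
  rw [intervalIntegral.integral_congr habs, intervalIntegral.integral_sub intervalIntegrable_const
    ((continuous_polarPoissonKernel hq').intervalIntegrable _ _),
    integral_polarPoissonKernel hq', intervalIntegral.integral_const]
  simp only [sin_add_pi, cos_add_pi, sin_pi_div_two, cos_pi_div_two, neg_zero, mul_one, mul_zero,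
    sub_zero, div_one, mul_neg, arctan_neg, smul_eq_mul]
  ring

lemma integral_abs_polarPoissonKernel_sub (hq₀ : 0 ≤ q) (hq : q < 1) (φ : ℝ) :
    ∫ t in (0)..(2 * π), |polarPoissonKernel q (t - φ) - polarPoissonKernel q (π / 2)| =
      8 * arctan q := by
  have hcont : Continuous fun t => |polarPoissonKernel q t - polarPoissonKernel q (π / 2)| :=
    ((continuous_polarPoissonKernel (by rwa [abs_of_nonneg hq₀])).sub continuous_const).abs
  have hper : Function.Periodic
      (fun t => |polarPoissonKernel q t - polarPoissonKernel q (π / 2)|) (2 * π) := fun t => by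
    simp only [polarPoissonKernel, cos_add_two_pi]
  have hshift := hper.intervalIntegral_add_eq (0 - φ) (-(π / 2))
  rw [intervalIntegral.integral_comp_sub_right
      (fun t => |polarPoissonKernel q t - polarPoissonKernel q (π / 2)|),
    show 2 * π - φ = 0 - φ + 2 * π by ring, hshift,
    show -(π / 2) + 2 * π = π / 2 + π by ring,
    ← intervalIntegral.integral_add_adjacent_intervals (hcont.intervalIntegrable _ (π / 2))
      (hcont.intervalIntegrable _ _),
    integral_abs_polarPoissonKernel_sub_right_half hq₀ hq,
    integral_abs_polarPoissonKernel_sub_left_half hq₀ hq]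
  ring

end PolarKernel

section PoissonKernel

variable {E : Type*} [NormedAddCommGroup E] [NormedSpace ℝ E] {c z : ℂ} {R : ℝ}

lemma norm_circleAverage_le_of_norm_le {f : ℂ → E} {B : ℂ → ℝ} (hB : CircleIntegrable B c R)
    (hfB : ∀ ζ ∈ sphere c |R|, ‖f ζ‖ ≤ B ζ) : ‖circleAverage f c R‖ ≤ circleAverage B c R := by
  rw [circleAverage_def, circleAverage_def, norm_smul, norm_of_nonneg (by positivity), smul_eq_mul]
  gcongr
  exact intervalIntegral.norm_integral_le_of_norm_le (by positivity)
    (Eventually.of_forall fun t _ => hfB _ (circleMap_mem_sphere' c R t)) hB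

lemma continuousOn_poissonKernel_sphere (hz : z ∈ ball c R) :
    ContinuousOn (poissonKernel c z) (sphere c |R|) := by
  rw [poissonKernel_eq_re_herglotzRieszKernel]
  exact Complex.continuous_re.comp_continuousOn (continuousOn_herglotzRieszKernel_sphere hz)

lemma poissonKernel_nonneg_of_mem_sphere (hz : z ∈ ball c R) {ζ : ℂ} (hζ : ζ ∈ sphere c |R|) :
    0 ≤ poissonKernel c z ζ := by
  have hzR : ‖z - c‖ < |R| := (mem_ball_iff_norm.1 hz).trans_le (le_abs_self R)
  rw [poissonKernel_def, mem_sphere_iff_norm.1 hζ]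
  exact div_nonneg (sub_nonneg.2 (by gcongr)) (by positivity)

lemma circleAverage_poissonKernel (hz : z ∈ ball c R) :
    circleAverage (poissonKernel c z) c R = 1 := by
  have h := HarmonicOnNhd.circleAverage_poissonKernel_smul (f := fun _ => 1)
    (harmonicOnNhd_const _) hz
  rwa [show poissonKernel c z • (fun _ => (1 : ℝ)) = poissonKernel c z by ext; simp] at h

lemma norm_circleAverage_poissonKernel_smul_le {ψ : ℂ → E} {C : ℝ}
    (hC : ∀ ζ ∈ sphere c |R|, ‖ψ ζ‖ ≤ C) (hz : z ∈ ball c R) :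
    ‖circleAverage (poissonKernel c z • ψ) c R‖ ≤ C := by
  have hint : CircleIntegrable (fun ζ => C • poissonKernel c z ζ) c R :=
    ((continuousOn_poissonKernel_sphere hz).const_smul C).circleIntegrable'
  calc ‖circleAverage (poissonKernel c z • ψ) c R‖
      ≤ circleAverage (fun ζ => C • poissonKernel c z ζ) c R := by
        refine norm_circleAverage_le_of_norm_le hint fun ζ hζ => ?_
        have hP := poissonKernel_nonneg_of_mem_sphere hz hζ
        rw [Pi.smul_apply', norm_smul, norm_of_nonneg hP, mul_comm, smul_eq_mul]
        gcongr
        exact hC ζ hζ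
    _ = C := by
        rw [circleAverage_fun_smul, circleAverage_poissonKernel hz, smul_eq_mul, mul_one]

lemma norm_circleMap_sub_sq (c z : ℂ) (R t : ℝ) :
    ‖circleMap c R t - z‖ ^ 2 =
      R ^ 2 + ‖z - c‖ ^ 2 - 2 * R * ‖z - c‖ * cos (t - (z - c).arg) := by
  have hre := Complex.norm_mul_cos_arg (z - c)
  have him := Complex.norm_mul_sin_arg (z - c)
  rw [show circleMap c R t - z = circleMap 0 R t - (z - c) by simp only [circleMap]; ring,
    ← Complex.normSq_eq_norm_sq, ← Complex.normSq_eq_norm_sq, Complex.normSq_apply,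
    Complex.normSq_apply, cos_sub]
  simp only [circleMap, zero_add, Complex.sub_re (_ * _), Complex.sub_im (_ * _),
    Complex.re_ofReal_mul, Complex.im_ofReal_mul, Complex.exp_ofReal_mul_I_re,
    Complex.exp_ofReal_mul_I_im]
  linear_combination R ^ 2 * sin_sq_add_cos_sq t + 2 * R * cos t * hre + 2 * R * sin t * him

lemma poissonKernel_circleMap (hR : R ≠ 0) (t : ℝ) :
    poissonKernel c z (circleMap c R t) =
      polarPoissonKernel (‖z - c‖ / R) (t - (z - c).arg) := by
  rw [poissonKernel_def, sub_sub_sub_cancel_right, circleMap_sub_center, norm_circleMap_zero,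
    sq_abs, norm_circleMap_sub_sq, polarPoissonKernel]
  field_simp

lemma circleAverage_abs_poissonKernel_sub (hz : z ∈ ball c R) :
    circleAverage (fun ζ => |poissonKernel c z ζ -
      (R ^ 2 - ‖z - c‖ ^ 2) / (R ^ 2 + ‖z - c‖ ^ 2)|) c R = 4 / π * arctan (‖z - c‖ / R) := by
  have hR : 0 < R := pos_of_mem_ball hz
  have hq : ‖z - c‖ / R < 1 := (div_lt_one hR).2 (mem_ball_iff_norm.1 hz)
  have hcenter : (R ^ 2 - ‖z - c‖ ^ 2) / (R ^ 2 + ‖z - c‖ ^ 2) =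
      polarPoissonKernel (‖z - c‖ / R) (π / 2) := by
    rw [polarPoissonKernel, cos_pi_div_two, mul_zero, sub_zero]
    field_simp
  rw [circleAverage_def, hcenter]
  simp only [poissonKernel_circleMap hR.ne',
    integral_abs_polarPoissonKernel_sub (by positivity) hq, smul_eq_mul]
  ring

end PoissonKernel

section SchwarzLemma

variable {U : ℂ → ℝ} {c z : ℂ} {R M : ℝ}

lemma sub_mul_center_eq_circleAverage (hU : HarmonicContOnCl U (ball c R)) (hz : z ∈ ball c R)
    (k : ℝ) : U z - k * U c = circleAverage (fun ζ => (poissonKernel c z ζ - k) * U ζ) c R := by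
  have hR : 0 < R := pos_of_mem_ball hz
  have hUcont : ContinuousOn U (sphere c |R|) := by
    rw [abs_of_pos hR]
    exact hU.2.mono (sphere_subset_closedBall.trans (closure_ball c hR.ne').ge)
  have hcenter : circleAverage U c R = U c :=
    InnerProductSpace.HarmonicContOnCl.circleAverage_eq (by rwa [abs_of_pos hR])
  have hpoint : circleAverage (poissonKernel c z • U) c R = U z :=
    hU.circleAverage_poissonKernel_smul hz
  have hsplit : (fun ζ => (poissonKernel c z ζ - k) * U ζ) = poissonKernel c z • U - k • U :=
    funext fun ζ => sub_mul (poissonKernel c z ζ) k (U ζ)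
  rw [hsplit, circleAverage_sub
    ((continuousOn_poissonKernel_sphere hz).smul hUcont).circleIntegrable'
    (hUcont.const_smul k).circleIntegrable', circleAverage_smul, hpoint, hcenter, smul_eq_mul]

lemma abs_sub_mul_center_le_of_harmonicContOnCl (hU : HarmonicContOnCl U (ball c R))
    (hM : ∀ ζ ∈ sphere c R, |U ζ| ≤ M) (hz : z ∈ ball c R) :
    |U z - (R ^ 2 - ‖z - c‖ ^ 2) / (R ^ 2 + ‖z - c‖ ^ 2) * U c| ≤
      4 * M / π * arctan (‖z - c‖ / R) := by
  set k : ℝ := (R ^ 2 - ‖z - c‖ ^ 2) / (R ^ 2 + ‖z - c‖ ^ 2)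
  have hint : CircleIntegrable (fun ζ => M • |poissonKernel c z ζ - k|) c R :=
    (((continuousOn_poissonKernel_sphere hz).sub continuousOn_const).abs.const_smul
      M).circleIntegrable'
  calc |U z - k * U c|
      = ‖circleAverage (fun ζ => (poissonKernel c z ζ - k) * U ζ) c R‖ := by
        rw [sub_mul_center_eq_circleAverage hU hz, norm_eq_abs]
    _ ≤ circleAverage (fun ζ => M • |poissonKernel c z ζ - k|) c R := by
        refine norm_circleAverage_le_of_norm_le hint fun ζ hζ => ?_
        rw [abs_of_pos (pos_of_mem_ball hz)] at hζ
        rw [norm_mul, mul_comm, norm_eq_abs, norm_eq_abs, smul_eq_mul]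
        gcongr
        exact hM ζ hζ
    _ = 4 * M / π * arctan (‖z - c‖ / R) := by
        rw [circleAverage_fun_smul, circleAverage_abs_poissonKernel_sub hz, smul_eq_mul]
        ring

lemma abs_sub_mul_center_le_of_harmonicOnNhd (hU : HarmonicOnNhd U (ball c R))
    (hM : ∀ w ∈ ball c R, |U w| ≤ M) (hz : z ∈ ball c R) :
    |U z - (R ^ 2 - ‖z - c‖ ^ 2) / (R ^ 2 + ‖z - c‖ ^ 2) * U c| ≤
      4 * M / π * arctan (‖z - c‖ / R) := by
  have hR : 0 < R := pos_of_mem_ball hz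
  have hlhs : ContinuousAt
      (fun ρ : ℝ => |U z - (ρ ^ 2 - ‖z - c‖ ^ 2) / (ρ ^ 2 + ‖z - c‖ ^ 2) * U c|) R := by
    fun_prop (disch := positivity)
  have hrhs : ContinuousAt (fun ρ : ℝ => 4 * M / π * arctan (‖z - c‖ / ρ)) R := by
    fun_prop (disch := positivity)
  refine le_of_tendsto_of_tendsto (b := 𝓝[<] R) (hlhs.tendsto.mono_left nhdsWithin_le_nhds)
    (hrhs.tendsto.mono_left nhdsWithin_le_nhds) ?_
  filter_upwards [Ioo_mem_nhdsLT (mem_ball_iff_norm.1 hz)] with ρ hρ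
  have hsub : closedBall c ρ ⊆ ball c R := closedBall_subset_ball hρ.2
  exact abs_sub_mul_center_le_of_harmonicContOnCl
    (hU.mono (closure_ball_subset_closedBall.trans hsub)).harmonicContOnCl
    (fun ζ hζ => hM ζ (hsub (sphere_subset_closedBall hζ))) (mem_ball_iff_norm.2 hρ.1)

lemma norm_sub_smul_center_le_of_harmonicOnNhd {E : Type*} [NormedAddCommGroup E]
    [NormedSpace ℝ E] {F : ℂ → E} (hF : HarmonicOnNhd F (ball c R))
    (hM : ∀ w ∈ ball c R, ‖F w‖ ≤ M) (hz : z ∈ ball c R) :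
    ‖F z - ((R ^ 2 - ‖z - c‖ ^ 2) / (R ^ 2 + ‖z - c‖ ^ 2)) • F c‖ ≤
      4 * M / π * arctan (‖z - c‖ / R) := by
  obtain ⟨L, hL, hLnorm⟩ := exists_dual_vector'' ℝ
    (F z - ((R ^ 2 - ‖z - c‖ ^ 2) / (R ^ 2 + ‖z - c‖ ^ 2)) • F c)
  have hLM : ∀ w ∈ ball c R, |L (F w)| ≤ M := fun w hw =>
    (L.le_of_opNorm_le hL (F w)).trans (by simpa only [one_mul] using hM w hw)
  rw [map_sub, map_smul, smul_eq_mul, RCLike.ofReal_real_eq_id, id_eq] at hLnorm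
  rw [← hLnorm]
  exact (le_abs_self _).trans
    (abs_sub_mul_center_le_of_harmonicOnNhd (hF.comp_CLM L) hLM hz)

end SchwarzLemma

section PoissonIntegral

variable {ψ : ℂ → ℂ} {R : ℝ}

lemma harmonicOnNhd_circleAverage_poissonKernel_smul_real {φ : ℂ → ℝ}
    (hφ : CircleIntegrable φ 0 R) :
    HarmonicOnNhd (fun w => circleAverage (poissonKernel 0 w • φ) 0 R) (ball 0 R) := by
  have hφ' : CircleIntegrable (fun ζ => (φ ζ : ℂ)) 0 R := by
    simp only [CircleIntegrable, intervalIntegrable_iff] at hφ ⊢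
    exact hφ.ofReal
  have heq : EqOn (fun w => circleAverage (poissonKernel 0 w • φ) 0 R) (fun w =>
      (circleAverage (fun ζ => herglotzRieszKernel 0 w ζ • (φ ζ : ℂ)) 0 R).re) (ball 0 R) :=
    fun w hw => by
      simp only [re_circleAverage_herglotzRieszKernel_smul hφ hw,
        poissonKernel_eq_re_herglotzRieszKernel]
  intro w hw
  rw [harmonicAt_congr_nhds (heq.eventuallyEq_of_mem (isOpen_ball.mem_nhds hw))]
  exact (analyticOnNhd_circleAverage_herglotzRieszKernel_smul hφ' w hw).harmonicAt_re

lemma circleIntegrable_poissonKernel_smul {c w : ℂ} (hψ : CircleIntegrable ψ c R)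
    (hw : w ∈ ball c R) : CircleIntegrable (poissonKernel c w • ψ) c R :=
  IntervalIntegrable.continuousOn_smul hψ ((continuousOn_poissonKernel_sphere hw).comp
    (continuous_circleMap c R).continuousOn fun t _ => circleMap_mem_sphere' c R t)

lemma harmonicOnNhd_circleAverage_poissonKernel_smul (hψ : CircleIntegrable ψ 0 R) :
    HarmonicOnNhd (fun w => circleAverage (poissonKernel 0 w • ψ) 0 R) (ball 0 R) := by
  have hre : CircleIntegrable (fun ζ => (ψ ζ).re) 0 R := by
    simp only [CircleIntegrable, intervalIntegrable_iff] at hψ ⊢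
    exact hψ.re
  have him : CircleIntegrable (fun ζ => (ψ ζ).im) 0 R := by
    simp only [CircleIntegrable, intervalIntegrable_iff] at hψ ⊢
    exact hψ.im
  have hparts : EqOn (fun w => circleAverage (poissonKernel 0 w • ψ) 0 R)
      (Complex.ofRealCLM ∘ (fun w => circleAverage (poissonKernel 0 w • fun ζ => (ψ ζ).re) 0 R) +
        ContinuousLinearMap.toSpanSingleton ℝ Complex.I ∘
          fun w => circleAverage (poissonKernel 0 w • fun ζ => (ψ ζ).im) 0 R) (ball 0 R) := by
    intro w hw
    have hint := circleIntegrable_poissonKernel_smul hψ hw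
    have hre' : circleAverage (poissonKernel 0 w • fun ζ => (ψ ζ).re) 0 R =
        (circleAverage (poissonKernel 0 w • ψ) 0 R).re := by
      rw [← Complex.reCLM_apply, ← Complex.reCLM.circleAverage_comp_comm hint]
      congr 1 with ζ
      exact (Complex.smul_re (poissonKernel 0 w ζ) (ψ ζ)).symm
    have him' : circleAverage (poissonKernel 0 w • fun ζ => (ψ ζ).im) 0 R =
        (circleAverage (poissonKernel 0 w • ψ) 0 R).im := by
      rw [← Complex.imCLM_apply, ← Complex.imCLM.circleAverage_comp_comm hint]
      congr 1 with ζ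
      exact (Complex.smul_im (poissonKernel 0 w ζ) (ψ ζ)).symm
    simp only [Pi.add_apply, Function.comp_apply, hre', him', Complex.ofRealCLM_apply,
      ContinuousLinearMap.toSpanSingleton_apply, Complex.real_smul, Complex.re_add_im]
  intro w hw
  rw [harmonicAt_congr_nhds (hparts.eventuallyEq_of_mem (isOpen_ball.mem_nhds hw))]
  exact ((harmonicOnNhd_circleAverage_poissonKernel_smul_real hre w hw).comp_CLM _).add
    ((harmonicOnNhd_circleAverage_poissonKernel_smul_real him w hw).comp_CLM _)

lemma exp_I_mul_eq_circleMap (t : ℝ) : Complex.exp (Complex.I * t) = circleMap 0 1 t := by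
  rw [circleMap, zero_add, Complex.ofReal_one, one_mul, mul_comm]

lemma poissonIntegral_eq_circleAverage (ψ : ℂ → ℂ) (z : ℂ) :
    poissonIntegral ψ z = circleAverage (poissonKernel 0 z • ψ) 0 1 := by
  have hden : ∀ t : ℝ, ‖1 - z * Complex.exp (-(Complex.I * t))‖ = ‖circleMap 0 1 t - z‖ :=
    fun t => by
      have hfactor : circleMap 0 1 t - z =
          circleMap 0 1 t * (1 - z * Complex.exp (-(Complex.I * t))) := by
        rw [← exp_I_mul_eq_circleMap, mul_sub, mul_one, mul_left_comm, ← Complex.exp_add,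
          add_neg_cancel, Complex.exp_zero, mul_one]
      rw [hfactor, norm_mul, norm_circleMap_zero, abs_one, one_mul]
  simp only [poissonIntegral, circleAverage_def, Pi.smul_apply', poissonKernel_def, sub_zero,
    norm_circleMap_zero, abs_one, one_pow, hden, exp_I_mul_eq_circleMap, Complex.real_smul, one_div]

lemma circleIntegrable_iff_exp_I_mul :
    CircleIntegrable ψ 0 1 ↔
      IntervalIntegrable (fun t : ℝ => ψ (Complex.exp (Complex.I * t))) volume 0 (2 * π) := by
  simp only [CircleIntegrable, exp_I_mul_eq_circleMap]

lemma poissonIntegral_zero (ψ : ℂ → ℂ) : poissonIntegral ψ 0 =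
    (1 / (2 * π)) • ∫ t in (0)..(2 * π), ψ (Complex.exp (Complex.I * t)) := by
  simp [poissonIntegral]

lemma bddAbove_norm_poissonIntegral {C : ℝ} (hC : ∀ ζ ∈ sphere (0 : ℂ) 1, ‖ψ ζ‖ ≤ C) :
    BddAbove ((fun z => ‖poissonIntegral ψ z‖) '' ball 0 1) := by
  refine ⟨C, forall_mem_image.2 fun z hz => ?_⟩
  rw [poissonIntegral_eq_circleAverage]
  exact norm_circleAverage_poissonKernel_smul_le (by rwa [abs_one]) hz

lemma le_supD {g : ℂ → ℂ} (hg : BddAbove ((fun z => ‖g z‖) '' ball 0 1)) {w : ℂ}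
    (hw : w ∈ ball 0 1) : ‖g w‖ ≤ supD g :=
  le_csSup hg (mem_image_of_mem _ hw)

lemma norm_poissonIntegral_sub_smul_le
    (hψ : IntervalIntegrable (fun t : ℝ => ψ (Complex.exp (Complex.I * t))) volume 0 (2 * π))
    {M : ℝ} (hM : ∀ w ∈ ball 0 1, ‖poissonIntegral ψ w‖ ≤ M) {z : ℂ} (hz : z ∈ ball 0 1) :
    ‖poissonIntegral ψ z - ((1 - ‖z‖ ^ 2) / (1 + ‖z‖ ^ 2)) • poissonIntegral ψ 0‖ ≤
      4 * M / π * arctan ‖z‖ := by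
  have hharm : HarmonicOnNhd (poissonIntegral ψ) (ball 0 1) := by
    rw [funext (poissonIntegral_eq_circleAverage ψ)]
    exact harmonicOnNhd_circleAverage_poissonKernel_smul (circleIntegrable_iff_exp_I_mul.2 hψ)
  simpa only [one_pow, sub_zero, div_one] using norm_sub_smul_center_le_of_harmonicOnNhd hharm hM hz

end PoissonIntegral

section PolarCoordinates

variable {R : ℝ}

lemma polarCoord_symm_eq_circleMap (p : ℝ × ℝ) :
    Complex.polarCoord.symm p = circleMap 0 p.1 p.2 := by
  rw [Complex.polarCoord_symm_apply, circleMap, Complex.exp_mul_I, zero_add, Complex.ofReal_cos,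
    Complex.ofReal_sin]

lemma setLIntegral_ball_eq_setLIntegral_circleMap {f : ℂ → ENNReal} (hf : Measurable f) :
    ∫⁻ w in ball 0 R, f w = ∫⁻ s in Ioo 0 R,
      ENNReal.ofReal s * ∫⁻ θ in Ioo (-π) π, f (circleMap 0 s θ) := by
  have hcirc : Measurable fun p : ℝ × ℝ => circleMap 0 p.1 p.2 := by
    unfold circleMap
    fun_prop
  have hmeas : Measurable fun p : ℝ × ℝ =>
      ENNReal.ofReal p.1 * (ball 0 R).indicator f (circleMap 0 p.1 p.2) :=
    measurable_fst.ennreal_ofReal.mul ((hf.indicator measurableSet_ball).comp hcirc)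
  have hinner : ∀ s ∈ Ioi (0 : ℝ), ∫⁻ θ in Ioo (-π) π,
      ENNReal.ofReal s * (ball 0 R).indicator f (circleMap 0 s θ) =
        (Iio R).indicator
          (fun s => ENNReal.ofReal s * ∫⁻ θ in Ioo (-π) π, f (circleMap 0 s θ)) s := by
    intro s hs
    have hmem : ∀ θ, circleMap 0 s θ ∈ ball 0 R ↔ s ∈ Iio R := fun θ => by
      rw [mem_ball_zero_iff, norm_circleMap_zero, abs_of_pos hs, mem_Iio]
    by_cases hsR : s ∈ Iio R
    · simp only [indicator_of_mem, hmem, hsR]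
      exact lintegral_const_mul _ (hf.comp (continuous_circleMap 0 s).measurable)
    · simp only [indicator_of_notMem, hmem, hsR, not_false_eq_true, mul_zero, lintegral_zero]
  rw [← lintegral_indicator measurableSet_ball, ← Complex.lintegral_comp_polarCoord_symm,
    polarCoord_target, Measure.volume_eq_prod]
  simp only [polarCoord_symm_eq_circleMap, smul_eq_mul]
  rw [setLIntegral_prod _ hmeas.aemeasurable,
    setLIntegral_congr_fun measurableSet_Ioi hinner, setLIntegral_indicator measurableSet_Iio,
    inter_comm, Ioi_inter_Iio]

lemma setLIntegral_circleMap_eq_circleAverage {f : ℂ → ℝ} {c : ℂ} (hf : CircleIntegrable f c R)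
    (hnonneg : ∀ ζ ∈ sphere c |R|, 0 ≤ f ζ) :
    ∫⁻ θ in Ioo (-π) π, ENNReal.ofReal (f (circleMap c R θ)) =
      ENNReal.ofReal (2 * π * circleAverage f c R) := by
  have hper : Function.Periodic (fun θ => f (circleMap c R θ)) (2 * π) :=
    (periodic_circleMap c R).comp f
  have hint : IntegrableOn (fun θ => f (circleMap c R θ)) (Ioc (-π) π) :=
    (intervalIntegrable_iff_integrableOn_Ioc_of_le (by linarith [pi_pos])).1
      (hper.intervalIntegrable₀ two_pi_pos.ne' hf _ _)
  have hshift := hper.intervalIntegral_add_eq (-π) 0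
  rw [zero_add, show -π + 2 * π = π by ring] at hshift
  rw [circleAverage_def, smul_eq_mul, mul_inv_cancel_left₀ two_pi_pos.ne', ← hshift,
    intervalIntegral.integral_of_le (by linarith [pi_pos]), ← setLIntegral_congr Ioo_ae_eq_Ioc.symm,
    ofReal_integral_eq_lintegral_ofReal hint
      (Eventually.of_forall fun θ => hnonneg _ (circleMap_mem_sphere' c R θ))]

lemma setLIntegral_ball_eq_setLIntegral_circleAverage {f : ℂ → ℝ} (hmeas : Measurable f)
    (hf : ∀ s ∈ Ioo 0 R, CircleIntegrable f 0 s) (hnonneg : ∀ w ∈ ball 0 R, 0 ≤ f w) :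
    ∫⁻ w in ball 0 R, ENNReal.ofReal (f w) =
      ∫⁻ s in Ioo 0 R, ENNReal.ofReal (2 * π * (s * circleAverage f 0 s)) := by
  rw [setLIntegral_ball_eq_setLIntegral_circleMap hmeas.ennreal_ofReal]
  refine setLIntegral_congr_fun measurableSet_Ioo fun s hs => ?_
  have hsphere : sphere 0 |s| ⊆ ball (0 : ℂ) R := by
    rw [abs_of_pos hs.1]
    exact sphere_subset_ball hs.2
  rw [setLIntegral_circleMap_eq_circleAverage (hf s hs) fun ζ hζ => hnonneg ζ (hsphere hζ),
    ← ENNReal.ofReal_mul hs.1.le]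
  congr 1
  ring

end PolarCoordinates

section RadialIntegral

lemma hasDerivAt_mul_log_primitive {s : ℝ} (hs : s ≠ 0) :
    HasDerivAt (fun s => s * (s * log s) / 2 - s ^ 2 / 4) (s * log s) s := by
  refine ((((hasDerivAt_id s).mul (hasDerivAt_mul_log hs)).div_const 2).sub
    ((hasDerivAt_pow 2 s).div_const 4)).congr_deriv ?_
  simp only [id_eq]
  ring

lemma integral_mul_log (a b : ℝ) : ∫ s in a..b, s * log s =
    (b * (b * log b) / 2 - b ^ 2 / 4) - (a * (a * log a) / 2 - a ^ 2 / 4) :=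
  MeasureTheory.integral_eq_of_hasDerivAt_off_countable
    (fun s => s * (s * log s) / 2 - s ^ 2 / 4) _ (countable_singleton 0)
    (Continuous.continuousOn (by fun_prop)) (fun s hs => hasDerivAt_mul_log_primitive hs.2)
    (continuous_mul_log.intervalIntegrable _ _)

lemma continuous_mul_log_max (r : ℝ) : Continuous fun s => s * log (max s r) := by
  have hsplit : (fun s => s * log (max s r)) =
      fun s => max s r * log (max s r) - (max s r - s) * log r := by
    ext s
    rcases le_total s r with h | h
    · rw [max_eq_right h]
      ring
    · rw [max_eq_left h]
      ring
  have hmax : Continuous fun s => max s r := by fun_prop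
  rw [hsplit]
  exact (continuous_mul_log.comp hmax).sub (by fun_prop)

lemma integral_mul_log_max {r R : ℝ} (hr : 0 ≤ r) (hrR : r ≤ R) :
    ∫ s in (0)..R, s * log (max s r) = R ^ 2 / 2 * log R - (R ^ 2 - r ^ 2) / 4 := by
  have hinner : EqOn (fun s => s * log (max s r)) (fun s => s * log r) (uIcc 0 r) := fun s hs => by
    rw [uIcc_of_le hr] at hs
    simp only [max_eq_right hs.2]
  have houter : EqOn (fun s => s * log (max s r)) (fun s => s * log s) (uIcc r R) := fun s hs => by
    rw [uIcc_of_le hrR] at hs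
    simp only [max_eq_left hs.1]
  have hint := (continuous_mul_log_max r).intervalIntegrable (μ := volume)
  rw [← intervalIntegral.integral_add_adjacent_intervals (hint 0 r) (hint r R),
    intervalIntegral.integral_congr hinner, intervalIntegral.integral_congr houter,
    intervalIntegral.integral_mul_const, integral_id, integral_mul_log]
  ring

end RadialIntegral

section GreenFunction

variable {z w : ℂ}

/-- The Green function `G(z, w) = log |(1 - z w̄) / (z - w)|` of the unit disk. Since
`Real.log 0 = 0` and `x / 0 = 0`, it takes the value `0` on the diagonal. -/
def greenFunction (z w : ℂ) : ℝ :=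
  log ‖(1 - z * conj w) / (z - w)‖

lemma measurable_greenFunction (z : ℂ) : Measurable (greenFunction z) := by
  have hconj : Measurable (conj : ℂ → ℂ) := Complex.continuous_conj.measurable
  unfold greenFunction
  fun_prop

lemma norm_one_sub_mul_conj_sq_sub_norm_sub_sq (z w : ℂ) :
    ‖1 - z * conj w‖ ^ 2 - ‖z - w‖ ^ 2 = (1 - ‖z‖ ^ 2) * (1 - ‖w‖ ^ 2) := by
  simp only [← Complex.normSq_eq_norm_sq, Complex.normSq_apply, Complex.sub_re, Complex.sub_im,
    Complex.mul_re, Complex.mul_im, Complex.one_re, Complex.one_im, Complex.conj_re,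
    Complex.conj_im]
  ring

lemma greenFunction_nonneg (hz : ‖z‖ ≤ 1) (hw : ‖w‖ ≤ 1) : 0 ≤ greenFunction z w := by
  rcases eq_or_ne z w with rfl | hzw
  · simp [greenFunction]
  have hprod : 0 ≤ (1 - ‖z‖ ^ 2) * (1 - ‖w‖ ^ 2) :=
    mul_nonneg (sub_nonneg.2 (pow_le_one₀ (norm_nonneg z) hz))
      (sub_nonneg.2 (pow_le_one₀ (norm_nonneg w) hw))
  refine log_nonneg ?_
  rw [norm_div, one_le_div (norm_pos_iff.2 (sub_ne_zero.2 hzw)),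
    ← sq_le_sq₀ (norm_nonneg _) (norm_nonneg _)]
  linarith [norm_one_sub_mul_conj_sq_sub_norm_sub_sq z w]

lemma one_sub_conj_mul_ne_zero (hz : ‖z‖ < 1) (hw : ‖w‖ ≤ 1) : 1 - conj z * w ≠ 0 := by
  have hlt : ‖conj z * w‖ < 1 := by
    rw [norm_mul, Complex.norm_conj]
    exact mul_lt_one_of_nonneg_of_lt_one_left (norm_nonneg z) hz hw
  exact sub_ne_zero.2 fun h => by simp [← h] at hlt

lemma greenFunction_eq_log_sub_log (hz : ‖z‖ < 1) (hw : ‖w‖ ≤ 1) (hwz : w ≠ z) :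
    greenFunction z w = log ‖1 - conj z * w‖ - log ‖w - z‖ := by
  have hconj : ‖1 - z * conj w‖ = ‖1 - conj z * w‖ := by
    rw [← Complex.norm_conj, map_sub, map_one, map_mul, Complex.conj_conj]
  rw [greenFunction, norm_div, hconj, norm_sub_rev z w,
    log_div (norm_ne_zero_iff.2 (one_sub_conj_mul_ne_zero hz hw))
      (norm_ne_zero_iff.2 (sub_ne_zero.2 hwz))]

lemma greenFunction_eventuallyEq_codiscreteWithin (hz : ‖z‖ < 1) {s : ℝ} (hs : |s| ≤ 1) :
    (fun w => log ‖1 - conj z * w‖) - (fun w => log ‖w - z‖)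
      =ᶠ[codiscreteWithin (sphere 0 |s|)] greenFunction z := by
  filter_upwards [compl_singleton_mem_codiscreteWithin z, self_mem_codiscreteWithin _]
    with w hwz hw
  exact (greenFunction_eq_log_sub_log hz ((mem_sphere_zero_iff_norm.1 hw).trans_le hs) hwz).symm

lemma circleIntegrable_log_norm_one_sub_conj_mul (z : ℂ) (s : ℝ) :
    CircleIntegrable (fun w => log ‖1 - conj z * w‖) 0 s :=
  MeromorphicOn.circleIntegrable_log_norm fun w _ => by fun_prop

lemma circleIntegrable_greenFunction (hz : ‖z‖ < 1) {s : ℝ} (hs : |s| ≤ 1) :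
    CircleIntegrable (greenFunction z) 0 s :=
  ((circleIntegrable_log_norm_one_sub_conj_mul z s).sub
    (circleIntegrable_log_norm_sub_const s)).congr_codiscreteWithin
      (greenFunction_eventuallyEq_codiscreteWithin hz hs)

lemma circleAverage_log_norm_sub_const_eq_log_max {c a : ℂ} {R : ℝ} (hR : 0 < R) :
    circleAverage (fun w => log ‖w - a‖) c R = log (max R ‖c - a‖) := by
  rw [circleAverage_log_norm_sub_const_eq_log_radius_add_posLog hR.ne',
    posLog_eq_log_max_one (by positivity), ← log_mul hR.ne' (by positivity),
    mul_max_of_nonneg _ _ hR.le, mul_one, mul_inv_cancel_left₀ hR.ne']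

lemma circleAverage_greenFunction (hz : ‖z‖ < 1) {s : ℝ} (hs₀ : 0 < s) (hs : s ≤ 1) :
    circleAverage (greenFunction z) 0 s = -log (max s ‖z‖) := by
  have hs' : |s| ≤ 1 := by rwa [abs_of_pos hs₀]
  have hharm : HarmonicOnNhd (fun w => log ‖1 - conj z * w‖) (closedBall 0 |s|) := fun w hw =>
    AnalyticAt.harmonicAt_log_norm (by fun_prop)
      (one_sub_conj_mul_ne_zero hz ((mem_closedBall_zero_iff.1 hw).trans hs'))
  rw [← circleAverage_congr_codiscreteWithin
      (greenFunction_eventuallyEq_codiscreteWithin hz hs') hs₀.ne',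
    circleAverage_sub (circleIntegrable_log_norm_one_sub_conj_mul z s)
      (circleIntegrable_log_norm_sub_const s),
    InnerProductSpace.HarmonicOnNhd.circleAverage_eq hharm,
    circleAverage_log_norm_sub_const_eq_log_max hs₀, mul_zero, sub_zero, norm_one, log_one,
    zero_sub, zero_sub, norm_neg]

lemma setLIntegral_greenFunction (hz : ‖z‖ < 1) :
    ∫⁻ w in ball 0 1, ENNReal.ofReal (greenFunction z w) =
      ENNReal.ofReal (2 * π * ((1 - ‖z‖ ^ 2) / 4)) := by
  have hcont : Continuous fun s => 2 * π * -(s * log (max s ‖z‖)) :=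
    continuous_const.mul (continuous_mul_log_max ‖z‖).neg
  have hnonneg : ∀ s ∈ Ioo (0 : ℝ) 1, 0 ≤ 2 * π * -(s * log (max s ‖z‖)) := fun s hs => by
    have hlog : log (max s ‖z‖) ≤ 0 := log_nonpos (hs.1.le.trans (le_max_left _ _))
      (max_le hs.2.le hz.le)
    have := mul_nonneg hs.1.le (neg_nonneg.2 hlog)
    have := pi_pos
    rw [← mul_neg]
    positivity
  have hrad : ∫ s in (0)..1, 2 * π * -(s * log (max s ‖z‖)) = 2 * π * ((1 - ‖z‖ ^ 2) / 4) := by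
    rw [intervalIntegral.integral_const_mul, intervalIntegral.integral_neg,
      integral_mul_log_max (norm_nonneg z) hz.le, log_one]
    ring
  rw [setLIntegral_ball_eq_setLIntegral_circleAverage (measurable_greenFunction z)
    (fun s hs => circleIntegrable_greenFunction hz (by rw [abs_of_pos hs.1]; exact hs.2.le))
    (fun w hw => greenFunction_nonneg hz.le (mem_ball_zero_iff.1 hw).le), ← hrad,
    intervalIntegral.integral_of_le zero_le_one, integral_Ioc_eq_integral_Ioo,
    ofReal_integral_eq_lintegral_ofReal (hcont.integrableOn_Icc.mono_set Ioo_subset_Icc_self)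
      ((ae_restrict_iff' measurableSet_Ioo).2 (Eventually.of_forall hnonneg))]
  refine setLIntegral_congr_fun measurableSet_Ioo fun s hs => ?_
  simp only [circleAverage_greenFunction hz hs.1 hs.2.le, mul_neg]

lemma ae_greenFunction_nonneg (hz : ‖z‖ ≤ 1) :
    0 ≤ᵐ[volume.restrict (ball 0 1)] greenFunction z :=
  (ae_restrict_iff' measurableSet_ball).2
    (Eventually.of_forall fun _ hw => greenFunction_nonneg hz (mem_ball_zero_iff.1 hw).le)

lemma integrableOn_greenFunction (hz : ‖z‖ < 1) : IntegrableOn (greenFunction z) (ball 0 1) := by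
  refine ⟨(measurable_greenFunction z).aestronglyMeasurable, ?_⟩
  rw [hasFiniteIntegral_iff_ofReal (ae_greenFunction_nonneg hz.le), setLIntegral_greenFunction hz]
  exact ENNReal.ofReal_lt_top

lemma integral_greenFunction (hz : ‖z‖ < 1) :
    ∫ w in ball 0 1, greenFunction z w = 2 * π * ((1 - ‖z‖ ^ 2) / 4) := by
  have hsq : 0 ≤ 1 - ‖z‖ ^ 2 := sub_nonneg.2 (pow_le_one₀ (norm_nonneg z) hz.le)
  rw [integral_eq_lintegral_of_nonneg_ae (ae_greenFunction_nonneg hz.le)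
    (measurable_greenFunction z).aestronglyMeasurable, setLIntegral_greenFunction hz,
    ENNReal.toReal_ofReal (by positivity)]

lemma norm_greenPotential_le {g : ℂ → ℂ} {M : ℝ} (hg : ∀ w ∈ ball 0 1, ‖g w‖ ≤ M)
    (hz : z ∈ ball 0 1) : ‖greenPotential g z‖ ≤ M / 4 * (1 - ‖z‖ ^ 2) := by
  rw [mem_ball_zero_iff] at hz
  have hbound : ‖∫ w in ball 0 1, (greenFunction z w : ℂ) * g w‖ ≤
      ∫ w in ball 0 1, greenFunction z w * M := by
    refine norm_integral_le_of_norm_le ((integrableOn_greenFunction hz).mul_const M) ?_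
    filter_upwards [ae_greenFunction_nonneg hz.le, ae_restrict_mem measurableSet_ball] with w hG hw
    rw [norm_mul, Complex.norm_real, norm_of_nonneg hG]
    exact mul_le_mul_of_nonneg_left (hg w hw) hG
  calc ‖greenPotential g z‖
      = 1 / (2 * π) * ‖∫ w in ball 0 1, (greenFunction z w : ℂ) * g w‖ := by
        rw [greenPotential, norm_smul, norm_of_nonneg (by positivity)]
        rfl
    _ ≤ 1 / (2 * π) * ∫ w in ball 0 1, greenFunction z w * M := by gcongr
    _ = M / 4 * (1 - ‖z‖ ^ 2) := by
        rw [integral_mul_const, integral_greenFunction hz]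
        field_simp

end GreenFunction

end

theorem stmt0_general (g ψ f : ℂ → ℂ)
    (_hg : AEStronglyMeasurable g (volume.restrict (ball 0 1)))
    (hgbdd : BddAbove ((fun w => ‖g w‖) '' ball 0 1))
    (hψint : IntervalIntegrable (fun t : ℝ => ψ (Complex.exp (Complex.I * t)))
      volume 0 (2 * Real.pi))
    (hPbdd : BddAbove ((fun w => ‖poissonIntegral ψ w‖) '' ball 0 1))
    (hf : ∀ z ∈ ball (0 : ℂ) 1, f z = poissonIntegral ψ z - greenPotential g z) :
    ∀ z ∈ ball (0 : ℂ) 1,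
      ‖f z - ((1 - ‖z‖ ^ 2) / (1 + ‖z‖ ^ 2) : ℝ) •
          ((1 / (2 * Real.pi) : ℝ) •
            ∫ t in (0)..(2 * Real.pi), ψ (Complex.exp (Complex.I * t)))‖ ≤
        4 * supD (poissonIntegral ψ) / Real.pi * Real.arctan ‖z‖ +
          supD g / 4 * (1 - ‖z‖ ^ 2) := by
  intro z hz
  rw [← poissonIntegral_zero, hf z hz, sub_right_comm]
  exact (norm_sub_le _ _).trans (add_le_add
    (norm_poissonIntegral_sub_smul_le hψint (fun _ => le_supD hPbdd) hz)
    (norm_greenPotential_le (fun _ => le_supD hgbdd) hz))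

/-- Schwarz type lemma for solutions of the Poisson equation (Theorem 1.1). -/
theorem stmt0 (g ψ f : ℂ → ℂ)
    (hg : ContinuousOn g (closedBall (0:ℂ) 1))
    (hψint : IntervalIntegrable (fun t : ℝ => ψ (Complex.exp (Complex.I * (t : ℂ))))
      MeasureTheory.volume 0 (2 * Real.pi))
    (hψbdd : ∃ C : ℝ, ∀ ζ ∈ sphere (0:ℂ) 1, ‖ψ ζ‖ ≤ C)
    (hf : ∀ z ∈ ball (0:ℂ) 1, f z = poissonIntegral ψ z - greenPotential g z) :
    ∀ z ∈ ball (0:ℂ) 1,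
      ‖f z - ((1 - ‖z‖ ^ 2) / (1 + ‖z‖ ^ 2) : ℝ) •
          ((1 / (2 * Real.pi) : ℝ) •
            ∫ t in (0:ℝ)..(2 * Real.pi), ψ (Complex.exp (Complex.I * (t : ℂ))))‖ ≤
        4 * supD (poissonIntegral ψ) / Real.pi * Real.arctan ‖z‖ +
          supD g / 4 * (1 - ‖z‖ ^ 2) := by
  obtain ⟨_, hC⟩ := hψbdd
  exact stmt0_general g ψ f
    ((hg.mono ball_subset_closedBall).aestronglyMeasurable measurableSet_ball)
    (((isCompact_closedBall 0 1).bddAbove_image hg.norm).mono (image_mono ball_subset_closedBall))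
    hψint (bddAbove_norm_poissonIntegral hC) hf
end
end

section
/- Fix c ≥ 0 and define μ(r) = (c(1−r²)/(8r²))·[(1+r²)/(1−r²) − ((1−r²)/(2r))·log((1+r)/(1−r))] for r ∈ (0,1). Then μ is decreasing on (0,1), c/4 ≤ μ(r) ≤ c/3 for all r ∈ (0,1), lim_{r→0⁺} μ(r) = c/3, and lim_{r→1⁻} μ(r) = c/4. -/
open Metric MeasureTheory Set Filter

noncomputable section

/-!
On `(0, 1)` the function `μ` is given by the power series
`μ(r) = c (1/3 - ∑ r ^ (2 (k + 1)) / ((2 k + 1) (2 k + 3) (2 k + 5)))`. To see this, expand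
`log ((1 + r) / (1 - r)) / (2 r) = ∑ r ^ (2 k) / (2 k + 1)` and note that multiplying by
`(1 - r²)²` replaces the coefficients `1 / (2 k + 1)`, apart from the two lowest-order terms, by
their second differences. The new coefficients are positive and summable, so the series is
continuous and increasing on all of `[0, 1]`. It vanishes at `0`, and at `1` it telescopes to
`1/12 = 1/3 - 1/4`.
-/

theorem hasSum_sub_succ_of_antitone {u : ℕ → ℝ} {l : ℝ} (hu : Antitone u)
    (hl : Tendsto u atTop (nhds l)) : HasSum (fun k => u k - u (k + 1)) (u 0 - l) := by
  rw [hasSum_iff_tendsto_nat_of_nonneg fun k => sub_nonneg.2 (hu k.le_succ)]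
  simpa only [Finset.sum_range_sub'] using hl.const_sub (u 0)

theorem hasSum_sub_mul_pow {K : Type*} [Field K] [TopologicalSpace K] [IsTopologicalRing K]
    {a : ℕ → K} {x s : K} (hx : x ≠ 0) (h : HasSum (fun k => a k * x ^ k) s) :
    HasSum (fun k => (a (k + 1) - a k) * x ^ k) (((1 - x) * s - a 0) / x) := by
  have h_tail : HasSum (fun k => a (k + 1) * x ^ (k + 1)) (s - a 0) := by
    simpa using (hasSum_nat_add_iff' 1).2 h
  have h_term (k : ℕ) : (a (k + 1) - a k) * x ^ k = a (k + 1) * x ^ (k + 1) / x - a k * x ^ k := by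
    rw [pow_succ]
    field_simp
  have h_sum : ((1 - x) * s - a 0) / x = (s - a 0) / x - s := by
    field_simp
    ring
  rw [h_sum]
  exact ((h_tail.div_const x).sub h).congr_fun h_term

theorem continuousOn_tsum_mul_pow {ι R : Type*} [NormedRing R] [NormOneClass R] [CompleteSpace R]
    {a : ι → R} (ha : Summable fun i => ‖a i‖) (e : ι → ℕ) :
    ContinuousOn (fun x => ∑' i, a i * x ^ e i) (closedBall 0 1) := by
  refine continuousOn_tsum (fun i => by fun_prop) ha fun i x hx => ?_
  have hx_pow : ‖x ^ e i‖ ≤ 1 :=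
    (norm_pow_le x (e i)).trans (pow_le_one₀ (norm_nonneg x) (mem_closedBall_zero_iff.1 hx))
  exact (norm_mul_le _ _).trans (mul_le_of_le_one_right (norm_nonneg _) hx_pow)

theorem monotoneOn_tsum_mul_pow {ι : Type*} {a : ι → ℝ} (ha_nonneg : ∀ i, 0 ≤ a i)
    (ha : Summable a) (e : ι → ℕ) :
    MonotoneOn (fun x => ∑' i, a i * x ^ e i) (Icc 0 1) := by
  have h_summable {x : ℝ} (hx : x ∈ Icc (0 : ℝ) 1) : Summable fun i => a i * x ^ e i :=
    ha.of_nonneg_of_le (fun i => mul_nonneg (ha_nonneg i) (pow_nonneg hx.1 _))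
      fun i => mul_le_of_le_one_right (ha_nonneg i) (pow_le_one₀ hx.1 hx.2)
  intro x hx y hy hxy
  exact (h_summable hx).tsum_le_tsum
    (fun i => mul_le_mul_of_nonneg_left (pow_le_pow_left₀ hx.1 hxy _) (ha_nonneg i))
    (h_summable hy)

theorem hasSum_log_div_two_mul {r : ℝ} (hr₀ : r ≠ 0) (hr : |r| < 1) :
    HasSum (fun k : ℕ => 1 / (2 * k + 1 : ℝ) * (r ^ 2) ^ k)
      (Real.log ((1 + r) / (1 - r)) / (2 * r)) := by
  obtain ⟨hr_gt, hr_lt⟩ := abs_lt.1 hr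
  have h_term (k : ℕ) : 1 / (2 * k + 1 : ℝ) * (r ^ 2) ^ k =
      2 * (1 / (2 * k + 1)) * r ^ (2 * k + 1) / (2 * r) := by
    rw [← pow_mul, pow_succ]
    field_simp
  rw [Real.log_div (by linarith) (by linarith)]
  exact ((Real.hasSum_log_sub_log_of_abs_lt_one hr).div_const (2 * r)).congr_fun h_term

/-- The coefficient of `r ^ (2 (k + 1))` in the power series of `1/3 - μ(r)` for `c = 1`. -/
def muCoeff (k : ℕ) : ℝ :=
  1 / ((2 * k + 1) * (2 * k + 3) * (2 * k + 5))

/-- The power series expansion of `μ` at `0`. Unlike `mu`, whose values at `0` and `1` come from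
divisions by zero, it takes the right values at both endpoints. -/
def muSeries (c r : ℝ) : ℝ :=
  c * (1 / 3 - ∑' k, muCoeff k * r ^ (2 * (k + 1)))

theorem muCoeff_nonneg (k : ℕ) : 0 ≤ muCoeff k := by
  unfold muCoeff
  positivity

theorem hasSum_muCoeff : HasSum muCoeff (1 / 12) := by
  let u : ℕ → ℝ := fun k => 1 / (4 * ((2 * k + 1) * (2 * k + 3)))
  have hu_sub (k : ℕ) : u k - u (k + 1) = muCoeff k := by
    simp only [u, muCoeff]
    push_cast
    field_simp
    ring
  have hu_anti : Antitone u :=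
    antitone_nat_of_succ_le fun k => sub_nonneg.1 ((muCoeff_nonneg k).trans_eq (hu_sub k).symm)
  have hu_lim : Tendsto u atTop (nhds 0) := by
    refine squeeze_zero (fun k => by positivity) (fun k => ?_)
      tendsto_one_div_add_atTop_nhds_zero_nat
    refine one_div_le_one_div_of_le (by positivity) ?_
    nlinarith [k.cast_nonneg (α := ℝ)]
  convert hasSum_sub_succ_of_antitone hu_anti hu_lim using 1
  · exact funext fun k => (hu_sub k).symm
  · norm_num [u]

theorem hasSum_muCoeff_mul_pow {r : ℝ} (hr₀ : r ≠ 0) (hr : |r| < 1) :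
    HasSum (fun k => muCoeff k * r ^ (2 * (k + 1))) (1 / 3 - mu 1 r) := by
  have hr_sq : 1 - r ^ 2 ≠ 0 := (sub_pos.2 ((sq_lt_one_iff_abs_lt_one r).2 hr)).ne'
  let a : ℕ → ℝ := fun k => 1 / (2 * k + 1)
  have h_log := hasSum_log_div_two_mul hr₀ hr
  set L := Real.log ((1 + r) / (1 - r)) / (2 * r) with hL
  have h_coeff (k : ℕ) : muCoeff k = (a (k + 2) - a (k + 1) - (a (k + 1) - a k)) / 8 := by
    simp only [muCoeff, a]
    push_cast
    field_simp
    ring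
  have h_term (k : ℕ) : muCoeff k * r ^ (2 * (k + 1)) =
      r ^ 2 / 8 * ((a (k + 2) - a (k + 1) - (a (k + 1) - a k)) * (r ^ 2) ^ k) := by
    rw [h_coeff]
    ring
  have h_sum : 1 / 3 - mu 1 r = r ^ 2 / 8 *
      (((1 - r ^ 2) * (((1 - r ^ 2) * L - a 0) / r ^ 2) - (a 1 - a 0)) / r ^ 2) := by
    simp only [mu, hL, a]
    push_cast
    field_simp
    ring
  have h_diff := hasSum_sub_mul_pow (a := a) (pow_ne_zero 2 hr₀) h_log
  rw [h_sum]
  exact ((hasSum_sub_mul_pow (pow_ne_zero 2 hr₀) h_diff).mul_left (r ^ 2 / 8)).congr_fun h_term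

theorem mu_eq_muSeries (c : ℝ) {r : ℝ} (hr₀ : r ≠ 0) (hr : |r| < 1) :
    mu c r = muSeries c r := by
  rw [muSeries, (hasSum_muCoeff_mul_pow hr₀ hr).tsum_eq, sub_sub_cancel]
  simp only [mu]
  ring

theorem eqOn_mu_muSeries (c : ℝ) : EqOn (mu c) (muSeries c) (Ioo 0 1) := fun _ hr =>
  mu_eq_muSeries c hr.1.ne' ((abs_of_pos hr.1).trans_lt hr.2)

theorem muSeries_zero (c : ℝ) : muSeries c 0 = c / 3 := by
  simp [muSeries, div_eq_mul_inv]

theorem muSeries_one (c : ℝ) : muSeries c 1 = c / 4 := by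
  simp only [muSeries, one_pow, mul_one, hasSum_muCoeff.tsum_eq]
  ring

theorem continuousOn_muSeries (c : ℝ) : ContinuousOn (muSeries c) (Icc (-1) 1) := by
  have h_series := continuousOn_tsum_mul_pow hasSum_muCoeff.summable.norm fun k => 2 * (k + 1)
  rw [Real.closedBall_eq_Icc, zero_sub, zero_add] at h_series
  exact continuousOn_const.mul (continuousOn_const.sub h_series)

theorem antitoneOn_muSeries {c : ℝ} (hc : 0 ≤ c) : AntitoneOn (muSeries c) (Icc 0 1) :=
  fun _ hr _ hs hrs => mul_le_mul_of_nonneg_left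
    (sub_le_sub_left (monotoneOn_tsum_mul_pow muCoeff_nonneg hasSum_muCoeff.summable
      (fun k => 2 * (k + 1)) hr hs hrs) _) hc

theorem tendsto_mu_nhdsWithin_Ioo (c : ℝ) {a : ℝ} (ha : a ∈ Icc 0 1) :
    Tendsto (mu c) (nhdsWithin a (Ioo 0 1)) (nhds (muSeries c a)) := by
  have h_cont : ContinuousOn (muSeries c) (Icc 0 1) :=
    (continuousOn_muSeries c).mono (Icc_subset_Icc_left (by norm_num))
  exact ((h_cont a ha).mono Ioo_subset_Icc_self).tendsto.congr'
    (eqOn_mu_muSeries c).symm.eventuallyEq_nhdsWithin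

/-- Properties of the function `μ`: decreasing on (0,1), bounds `c/4 ≤ μ ≤ c/3`,
and its limits at the endpoints. -/
theorem stmt5 (c : ℝ) (hc : 0 ≤ c) :
    AntitoneOn (mu c) (Set.Ioo 0 1) ∧
    (∀ r ∈ Set.Ioo (0:ℝ) 1, c / 4 ≤ mu c r ∧ mu c r ≤ c / 3) ∧
    Filter.Tendsto (mu c) (nhdsWithin 0 (Set.Ioi 0)) (nhds (c / 3)) ∧
    Filter.Tendsto (mu c) (nhdsWithin 1 (Set.Iio 1)) (nhds (c / 4)) := by
  have h_anti := antitoneOn_muSeries hc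
  refine ⟨(h_anti.mono Ioo_subset_Icc_self).congr (eqOn_mu_muSeries c).symm,
    fun r hr => ?_, ?_, ?_⟩
  · have hr' : r ∈ Icc (0 : ℝ) 1 := Ioo_subset_Icc_self hr
    rw [eqOn_mu_muSeries c hr, ← muSeries_one, ← muSeries_zero]
    exact ⟨h_anti hr' (right_mem_Icc.2 zero_le_one) hr'.2,
      h_anti (left_mem_Icc.2 zero_le_one) hr' hr'.1⟩
  · rw [← nhdsWithin_Ioo_eq_nhdsGT zero_lt_one, ← muSeries_zero]
    exact tendsto_mu_nhdsWithin_Ioo c (left_mem_Icc.2 zero_le_one)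
  · rw [← nhdsWithin_Ioo_eq_nhdsLT zero_lt_one, ← muSeries_one]
    exact tendsto_mu_nhdsWithin_Ioo c (right_mem_Icc.2 zero_le_one)
end
end

section
/- For every z ∈ 𝔻 \ {0} with r = |z|, the improper integral ∫_𝔻 dA(w)/(|w|·|z−w|) equals ∫₀^{2π} log(1 − r cos t + √(1 + r² − 2r cos t)) dt − 2π log r + 2π log 2, and this quantity is at most 2π log(4(1+r)) − 2π log r. -/
/-!
In polar coordinates `w = x e^{it}` the Jacobian cancels `1 / |w|`, so the integral over the disk of
radius `R` becomes `∫∫ dx dt / |z - x e^{it}|`. Along each ray the law of cosines gives the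
primitive `log (x - r cos t + |z - x e^{it}|)`, where `r = |z|` and `t` is now measured from the
direction of `z`. Its value at `x = R` is the integrand of the answer; its value at `x = 0` is
`log r + log (1 - cos t)`, whose integral over a period is `2π log r - 2π log 2`. The primitive
increases with `x` and the triangle inequality gives `|z - x e^{it}| ≤ x + r`, so at `x = R` it lies
between `log (r (1 - cos t))` and `log (2 (R + r))`: this yields both the integrability and the
upper bound.
-/

open Metric MeasureTheory Set Filter

noncomputable section

open Real

/-- The distance between two points of the plane at distances `x` and `r` from the origin that are
seen from the origin under an angle of cosine `c`, as given by the law of cosines. -/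
def cosineDist (r c x : ℝ) : ℝ := √(x ^ 2 + r ^ 2 - 2 * x * r * c)

/-- A primitive of `x ↦ 1 / cosineDist r c x` when `r ≠ 0` and `c ^ 2 < 1`; it expresses the
integral of `w ↦ 1 / |z - w|` along a ray from the origin. -/
def invDistPrimitive (r c x : ℝ) : ℝ := log (x - r * c + cosineDist r c x)

section Radial

variable {r c : ℝ}

lemma abs_sub_mul_lt_cosineDist (hr : r ≠ 0) (hc : c ^ 2 < 1) (x : ℝ) :
    |x - r * c| < cosineDist r c x := by
  have hrc : 0 < r ^ 2 * (1 - c ^ 2) := mul_pos (by positivity) (sub_pos.2 hc)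
  rw [cosineDist, lt_sqrt (abs_nonneg _), sq_abs]
  linarith

lemma cosineDist_pos (hr : r ≠ 0) (hc : c ^ 2 < 1) (x : ℝ) : 0 < cosineDist r c x :=
  (abs_nonneg _).trans_lt (abs_sub_mul_lt_cosineDist hr hc x)

lemma sub_mul_add_cosineDist_pos (hr : r ≠ 0) (hc : c ^ 2 < 1) (x : ℝ) :
    0 < x - r * c + cosineDist r c x := by
  linarith [neg_lt_of_abs_lt (abs_sub_mul_lt_cosineDist hr hc x)]

lemma hasDerivAt_cosineDist (hr : r ≠ 0) (hc : c ^ 2 < 1) (x : ℝ) :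
    HasDerivAt (cosineDist r c) ((x - r * c) / cosineDist r c x) x := by
  have hsq : HasDerivAt (fun y ↦ y ^ 2 + r ^ 2 - 2 * y * r * c) (2 * (x - r * c)) x := by
    refine (((hasDerivAt_pow 2 x).add_const (r ^ 2)).sub
      ((((hasDerivAt_id x).const_mul 2).mul_const r).mul_const c)).congr_deriv ?_
    norm_num
    ring
  refine (hsq.sqrt (sqrt_pos.1 (cosineDist_pos hr hc x)).ne').congr_deriv ?_
  exact mul_div_mul_left _ _ two_ne_zero

lemma hasDerivAt_invDistPrimitive (hr : r ≠ 0) (hc : c ^ 2 < 1) (x : ℝ) :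
    HasDerivAt (invDistPrimitive r c) (cosineDist r c x)⁻¹ x := by
  have hD := (cosineDist_pos hr hc x).ne'
  have hpos := (sub_mul_add_cosineDist_pos hr hc x).ne'
  refine ((((hasDerivAt_id x).sub_const (r * c)).add
    (hasDerivAt_cosineDist hr hc x)).log hpos).congr_deriv ?_
  simp only [id, Pi.add_apply]
  field_simp
  ring

lemma continuous_inv_cosineDist (hr : r ≠ 0) (hc : c ^ 2 < 1) :
    Continuous fun x ↦ (cosineDist r c x)⁻¹ :=
  Continuous.inv₀ (by unfold cosineDist; fun_prop) fun x ↦ (cosineDist_pos hr hc x).ne'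

lemma integral_inv_cosineDist (hr : r ≠ 0) (hc : c ^ 2 < 1) (a b : ℝ) :
    ∫ x in a..b, (cosineDist r c x)⁻¹ = invDistPrimitive r c b - invDistPrimitive r c a :=
  intervalIntegral.integral_eq_sub_of_hasDerivAt
    (fun x _ ↦ hasDerivAt_invDistPrimitive hr hc x)
    ((continuous_inv_cosineDist hr hc).intervalIntegrable a b)

lemma invDistPrimitive_mono (hr : r ≠ 0) (hc : c ^ 2 < 1) : Monotone (invDistPrimitive r c) :=
  monotone_of_hasDerivAt_nonneg (hasDerivAt_invDistPrimitive hr hc)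
    fun x ↦ (inv_pos.2 (cosineDist_pos hr hc x)).le

lemma invDistPrimitive_zero (hr : 0 < r) (hc : c < 1) :
    invDistPrimitive r c 0 = log r + log (1 - c) := by
  have hD : cosineDist r c 0 = r := by simp [cosineDist, sqrt_sq hr.le]
  rw [invDistPrimitive, hD, ← log_mul hr.ne' (sub_pos.2 hc).ne']
  ring_nf

lemma cosineDist_le_add {x : ℝ} (hr : 0 ≤ r) (hx : 0 ≤ x) (hc : -1 ≤ c) :
    cosineDist r c x ≤ x + r := by
  rw [cosineDist, sqrt_le_left (by positivity)]
  nlinarith [mul_nonneg (mul_nonneg hx hr) (neg_le_iff_add_nonneg.1 hc)]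

lemma invDistPrimitive_le_log {x : ℝ} (hr : 0 < r) (hx : 0 ≤ x) (hc : c ^ 2 < 1) :
    invDistPrimitive r c x ≤ log (2 * (x + r)) := by
  have hc' : -1 < c := (abs_lt.1 ((sq_lt_one_iff_abs_lt_one c).1 hc)).1
  refine log_le_log (sub_mul_add_cosineDist_pos hr.ne' hc x) ?_
  nlinarith [cosineDist_le_add hr.le hx hc'.le]

end Radial

section Angular

lemma ae_cos_sq_lt_one : ∀ᵐ t : ℝ, cos t ^ 2 < 1 := by
  have hzeros : {t : ℝ | sin t = 0} = range fun n : ℤ ↦ n * π := by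
    ext t
    exact sin_eq_zero_iff
  have hsin : ∀ᵐ t : ℝ, t ∉ {t : ℝ | sin t = 0} :=
    (hzeros ▸ countable_range _).ae_notMem volume
  filter_upwards [hsin] with t ht
  rw [cos_sq', sub_lt_self_iff]
  exact sq_pos_of_ne_zero ht

lemma one_sub_cos_eq (t : ℝ) : 1 - cos t = 2 * sin (t / 2) ^ 2 := by
  rw [sin_sq_eq_half_sub, mul_div_cancel₀ t two_ne_zero]
  ring

lemma intervalIntegrable_log_one_sub_cos (a b : ℝ) :
    IntervalIntegrable (fun t ↦ log (1 - cos t)) volume a b :=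
  MeromorphicOn.intervalIntegrable_log (f := fun t ↦ 1 - cos t) fun t _ ↦
    AnalyticAt.meromorphicAt (by fun_prop)

lemma integral_log_sin_half : ∫ t in 0..2 * π, log (sin (t / 2)) = -(2 * π * log 2) := by
  rw [intervalIntegral.integral_comp_div (fun x ↦ log (sin x)) two_ne_zero, zero_div,
    mul_div_cancel_left₀ π two_ne_zero, integral_log_sin_zero_pi, smul_eq_mul]
  ring

lemma integral_log_one_sub_cos : ∫ t in 0..2 * π, log (1 - cos t) = -(2 * π * log 2) := by
  have hlog : ∀ᵐ t : ℝ, log (1 - cos t) = log 2 + 2 * log (sin (t / 2)) := by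
    filter_upwards [ae_cos_sq_lt_one] with t ht
    have hsin : sin (t / 2) ≠ 0 := fun h ↦ by
      have : cos t = 1 := by linarith [one_sub_cos_eq t, show sin (t / 2) ^ 2 = 0 by simp [h]]
      simp [this] at ht
    rw [one_sub_cos_eq, log_mul two_ne_zero (pow_ne_zero 2 hsin), log_pow, Nat.cast_ofNat]
  have hint : IntervalIntegrable (fun t ↦ log (sin (t / 2))) volume 0 (2 * π) :=
    MeromorphicOn.intervalIntegrable_log (f := fun t ↦ sin (t / 2)) fun t _ ↦
      AnalyticAt.meromorphicAt (by fun_prop)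
  rw [intervalIntegral.integral_congr_ae (hlog.mono fun t ht _ ↦ ht),
    intervalIntegral.integral_add intervalIntegrable_const (hint.const_mul 2),
    intervalIntegral.integral_const_mul, integral_log_sin_half, intervalIntegral.integral_const,
    smul_eq_mul]
  ring

variable {r R : ℝ}

lemma ae_invDistPrimitive_cos_zero (hr : 0 < r) :
    ∀ᵐ t : ℝ, invDistPrimitive r (cos t) 0 = log r + log (1 - cos t) := by
  filter_upwards [ae_cos_sq_lt_one] with t ht
  exact invDistPrimitive_zero hr (abs_lt.1 ((sq_lt_one_iff_abs_lt_one _).1 ht)).2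

lemma intervalIntegrable_invDistPrimitive_cos_zero (hr : 0 < r) (a b : ℝ) :
    IntervalIntegrable (fun t ↦ invDistPrimitive r (cos t) 0) volume a b :=
  (intervalIntegrable_const.add (intervalIntegrable_log_one_sub_cos a b)).congr_ae <|
    ae_restrict_of_ae <| (ae_invDistPrimitive_cos_zero hr).mono fun _ ht ↦ ht.symm

lemma integral_invDistPrimitive_cos_zero (hr : 0 < r) :
    ∫ t in 0..2 * π, invDistPrimitive r (cos t) 0 = 2 * π * log r - 2 * π * log 2 := by
  rw [intervalIntegral.integral_congr_ae ((ae_invDistPrimitive_cos_zero hr).mono fun _ ht _ ↦ ht),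
    intervalIntegral.integral_add intervalIntegrable_const
      (intervalIntegrable_log_one_sub_cos _ _),
    integral_log_one_sub_cos, intervalIntegral.integral_const, smul_eq_mul]
  ring

lemma intervalIntegrable_invDistPrimitive_cos (hr : 0 < r) (hR : 0 ≤ R) (a b : ℝ) :
    IntervalIntegrable (fun t ↦ invDistPrimitive r (cos t) R) volume a b := by
  rw [intervalIntegrable_iff]
  refine integrable_of_le_of_le (g₁ := fun t ↦ invDistPrimitive r (cos t) 0)
    (g₂ := fun _ ↦ log (2 * (R + r))) ?_ ?_ ?_
    (intervalIntegrable_iff.1 (intervalIntegrable_invDistPrimitive_cos_zero hr a b))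
    (intervalIntegrable_iff.1 intervalIntegrable_const)
  · unfold invDistPrimitive cosineDist
    exact Measurable.aestronglyMeasurable (by fun_prop)
  · filter_upwards [ae_restrict_of_ae ae_cos_sq_lt_one] with t ht
    exact invDistPrimitive_mono hr.ne' ht hR
  · filter_upwards [ae_restrict_of_ae ae_cos_sq_lt_one] with t ht
    exact invDistPrimitive_le_log hr hR ht

lemma integral_invDistPrimitive_cos_le (hr : 0 < r) (hR : 0 ≤ R) :
    ∫ t in 0..2 * π, invDistPrimitive r (cos t) R ≤ 2 * π * log (2 * (R + r)) :=
  calc ∫ t in 0..2 * π, invDistPrimitive r (cos t) R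
      ≤ ∫ _ in 0..2 * π, log (2 * (R + r)) :=
        intervalIntegral.integral_mono_ae two_pi_pos.le
          (intervalIntegrable_invDistPrimitive_cos hr hR _ _) intervalIntegrable_const <|
          ae_cos_sq_lt_one.mono fun _ ht ↦ invDistPrimitive_le_log hr hR ht
    _ = 2 * π * log (2 * (R + r)) := by simp

lemma ae_cos_sub_sq_lt_one (φ : ℝ) : ∀ᵐ t : ℝ, cos (t - φ) ^ 2 < 1 :=
  (measurePreserving_sub_right volume φ).quasiMeasurePreserving.ae ae_cos_sq_lt_one

lemma ae_setIntegral_inv_cosineDist (hr : 0 < r) (hR : 0 ≤ R) (φ : ℝ) :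
    ∀ᵐ t : ℝ, ∫ x in Ioo 0 R, (cosineDist r (cos (t - φ)) x)⁻¹ =
      invDistPrimitive r (cos (t - φ)) R - invDistPrimitive r (cos (t - φ)) 0 := by
  filter_upwards [ae_cos_sub_sq_lt_one φ] with t ht
  rw [← integral_Ioc_eq_integral_Ioo, ← intervalIntegral.integral_of_le hR,
    integral_inv_cosineDist hr.ne' ht]

lemma intervalIntegrable_invDistPrimitive_cos_sub (hr : 0 < r) (hR : 0 ≤ R) (φ a b : ℝ) :
    IntervalIntegrable (fun t ↦ invDistPrimitive r (cos (t - φ)) R -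
      invDistPrimitive r (cos (t - φ)) 0) volume a b := by
  simpa using ((intervalIntegrable_invDistPrimitive_cos hr hR (a - φ) (b - φ)).sub
    (intervalIntegrable_invDistPrimitive_cos_zero hr (a - φ) (b - φ))).comp_sub_right φ

lemma integrableOn_inv_cosineDist (hr : 0 < r) (hR : 0 ≤ R) (φ : ℝ) :
    IntegrableOn (fun p : ℝ × ℝ ↦ (cosineDist r (cos (p.2 - φ)) p.1)⁻¹)
      (Ioo 0 R ×ˢ Ioo (-π) π) := by
  rw [IntegrableOn, Measure.volume_eq_prod, ← Measure.prod_restrict, integrable_prod_iff']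
  · constructor
    · filter_upwards [ae_restrict_of_ae (ae_cos_sub_sq_lt_one φ)] with t ht
      exact (intervalIntegrable_iff_integrableOn_Ioo_of_le hR).1
        ((continuous_inv_cosineDist hr.ne' ht).intervalIntegrable 0 R)
    · refine Integrable.congr
        ((intervalIntegrable_iff_integrableOn_Ioo_of_le (neg_le_self pi_pos.le)).1
          (intervalIntegrable_invDistPrimitive_cos_sub hr hR φ (-π) π)) ?_
      filter_upwards [ae_restrict_of_ae (ae_setIntegral_inv_cosineDist hr hR φ)] with t ht
      simp only [norm_inv, norm_of_nonneg (sqrt_nonneg _), cosineDist] at ht ⊢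
      exact ht.symm
  · unfold cosineDist
    exact Measurable.aestronglyMeasurable (by fun_prop)

lemma setIntegral_inv_cosineDist (hr : 0 < r) (hR : 0 ≤ R) (φ : ℝ) :
    ∫ p in Ioo 0 R ×ˢ Ioo (-π) π, (cosineDist r (cos (p.2 - φ)) p.1)⁻¹ =
      (∫ t in 0..2 * π, invDistPrimitive r (cos t) R) - 2 * π * log r + 2 * π * log 2 := by
  have hperiodic : Function.Periodic
      (fun t ↦ invDistPrimitive r (cos t) R - invDistPrimitive r (cos t) 0) (2 * π) :=
    fun t ↦ by simp only [cos_add_two_pi]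
  calc ∫ p in Ioo 0 R ×ˢ Ioo (-π) π, (cosineDist r (cos (p.2 - φ)) p.1)⁻¹
      = ∫ t in Ioo (-π) π, ∫ x in Ioo 0 R, (cosineDist r (cos (t - φ)) x)⁻¹ := by
        have hint := integrableOn_inv_cosineDist hr hR φ
        rw [IntegrableOn, Measure.volume_eq_prod, ← Measure.prod_restrict] at hint
        rw [Measure.volume_eq_prod, ← Measure.prod_restrict, integral_prod_symm _ hint]
    _ = ∫ t in -π..π, (invDistPrimitive r (cos (t - φ)) R -
          invDistPrimitive r (cos (t - φ)) 0) := by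
        rw [intervalIntegral.integral_of_le (neg_le_self pi_pos.le),
          integral_Ioc_eq_integral_Ioo]
        exact integral_congr_ae (ae_restrict_of_ae (ae_setIntegral_inv_cosineDist hr hR φ))
    _ = ∫ t in 0..2 * π, (invDistPrimitive r (cos t) R - invDistPrimitive r (cos t) 0) := by
        have hshift := hperiodic.intervalIntegral_add_eq (-π - φ) 0
        rw [intervalIntegral.integral_comp_sub_right
          (fun t ↦ invDistPrimitive r (cos t) R - invDistPrimitive r (cos t) 0)]
        convert hshift using 2 <;> ring
    _ = (∫ t in 0..2 * π, invDistPrimitive r (cos t) R) - 2 * π * log r + 2 * π * log 2 := by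
        rw [intervalIntegral.integral_sub (intervalIntegrable_invDistPrimitive_cos hr hR _ _)
          (intervalIntegrable_invDistPrimitive_cos_zero hr _ _),
          integral_invDistPrimitive_cos_zero hr]
        ring

end Angular

section Polar

lemma polarCoord_target_inter_preimage_ball (R : ℝ) :
    polarCoord.target ∩ Complex.polarCoord.symm ⁻¹' ball 0 R = Ioo 0 R ×ˢ Ioo (-π) π := by
  ext ⟨x, t⟩
  simp only [polarCoord_target, mem_inter_iff, mem_prod, mem_Ioi, mem_preimage,
    mem_ball_zero_iff, Complex.norm_polarCoord_symm, mem_Ioo]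
  constructor
  · rintro ⟨⟨hx, ht⟩, hxR⟩
    exact ⟨⟨hx, (abs_of_pos hx) ▸ hxR⟩, ht⟩
  · rintro ⟨⟨hx, hxR⟩, ht⟩
    exact ⟨⟨hx, ht⟩, (abs_of_pos hx).symm ▸ hxR⟩

lemma continuous_complex_polarCoord_symm : Continuous Complex.polarCoord.symm := by
  rw [funext Complex.polarCoord_symm_apply]
  fun_prop

lemma measurableSet_polarCoord_symm_preimage_ball (R : ℝ) :
    MeasurableSet (Complex.polarCoord.symm ⁻¹' ball 0 R) :=
  continuous_complex_polarCoord_symm.measurable measurableSet_ball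

lemma setLIntegral_ball_eq_polar (f : ℂ → ENNReal) (R : ℝ) :
    ∫⁻ w in ball 0 R, f w =
      ∫⁻ p in Ioo 0 R ×ˢ Ioo (-π) π, ENNReal.ofReal p.1 * f (Complex.polarCoord.symm p) := by
  have hind (p : ℝ × ℝ) :
      ENNReal.ofReal p.1 • (ball 0 R).indicator f (Complex.polarCoord.symm p) =
        (Complex.polarCoord.symm ⁻¹' ball 0 R).indicator
          (fun p ↦ ENNReal.ofReal p.1 * f (Complex.polarCoord.symm p)) p := by
    simp only [indicator, smul_eq_mul, mul_ite, mul_zero]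
    rfl
  simp_rw [← lintegral_indicator measurableSet_ball, ← Complex.lintegral_comp_polarCoord_symm,
    hind, setLIntegral_indicator (measurableSet_polarCoord_symm_preimage_ball R), inter_comm,
    polarCoord_target_inter_preimage_ball]

variable {E : Type*} [NormedAddCommGroup E] [NormedSpace ℝ E]

lemma setIntegral_ball_eq_polar (f : ℂ → E) (R : ℝ) :
    ∫ w in ball 0 R, f w =
      ∫ p in Ioo 0 R ×ˢ Ioo (-π) π, p.1 • f (Complex.polarCoord.symm p) := by
  have hind (p : ℝ × ℝ) : p.1 • (ball 0 R).indicator f (Complex.polarCoord.symm p) =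
      (Complex.polarCoord.symm ⁻¹' ball 0 R).indicator
        (fun p ↦ p.1 • f (Complex.polarCoord.symm p)) p := by
    simp only [indicator, smul_ite, smul_zero]
    rfl
  simp_rw [← integral_indicator measurableSet_ball, ← Complex.integral_comp_polarCoord_symm, hind,
    setIntegral_indicator (measurableSet_polarCoord_symm_preimage_ball R),
    polarCoord_target_inter_preimage_ball]

lemma integrableOn_ball_iff_polar {f : ℂ → E} (hf : StronglyMeasurable f) (R : ℝ) :
    IntegrableOn f (ball 0 R) ↔
      IntegrableOn (fun p : ℝ × ℝ ↦ p.1 • f (Complex.polarCoord.symm p))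
        (Ioo 0 R ×ˢ Ioo (-π) π) := by
  have hpolar : StronglyMeasurable fun p : ℝ × ℝ ↦ p.1 • f (Complex.polarCoord.symm p) :=
    measurable_fst.stronglyMeasurable.smul
      (hf.comp_measurable continuous_complex_polarCoord_symm.measurable)
  have henorm : ∫⁻ w in ball 0 R, ‖f w‖ₑ =
      ∫⁻ p in Ioo 0 R ×ˢ Ioo (-π) π, ‖p.1 • f (Complex.polarCoord.symm p)‖ₑ := by
    rw [setLIntegral_ball_eq_polar]
    refine setLIntegral_congr_fun (measurableSet_Ioo.prod measurableSet_Ioo) fun p hp ↦ ?_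
    simp only [enorm_smul, Real.enorm_of_nonneg hp.1.1.le]
  simp only [IntegrableOn, Integrable, hf.aestronglyMeasurable, hpolar.aestronglyMeasurable,
    true_and, hasFiniteIntegral_iff_enorm, henorm]

lemma norm_sub_polarCoord_symm (z : ℂ) (p : ℝ × ℝ) :
    ‖z - Complex.polarCoord.symm p‖ = cosineDist ‖z‖ (cos (p.2 - z.arg)) p.1 := by
  rw [cosineDist, Complex.norm_def, Complex.polarCoord_symm_apply, cos_sub]
  congr 1
  have hnorm : ‖z‖ ^ 2 = z.re * z.re + z.im * z.im := by rw [Complex.sq_norm, Complex.normSq_apply]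
  have hre := Complex.norm_mul_cos_arg z
  have him := Complex.norm_mul_sin_arg z
  simp only [Complex.normSq_apply, Complex.sub_re, Complex.sub_im, Complex.re_ofReal_mul,
    Complex.im_ofReal_mul, Complex.add_re, Complex.add_im, Complex.ofReal_re, Complex.ofReal_im,
    Complex.mul_I_re, Complex.mul_I_im]
  linear_combination p.1 ^ 2 * sin_sq_add_cos_sq p.2 - hnorm +
    2 * p.1 * cos p.2 * hre + 2 * p.1 * sin p.2 * him

lemma smul_one_div_norm_mul_norm_sub (z : ℂ) {p : ℝ × ℝ} (hp : 0 < p.1) :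
    p.1 • (1 / (‖Complex.polarCoord.symm p‖ * ‖z - Complex.polarCoord.symm p‖)) =
      (cosineDist ‖z‖ (cos (p.2 - z.arg)) p.1)⁻¹ := by
  rw [norm_sub_polarCoord_symm, Complex.norm_polarCoord_symm, abs_of_pos hp, smul_eq_mul,
    mul_one_div, div_mul_cancel_left₀ hp.ne']

end Polar

theorem stmt9_general {z : ℂ} (hz : z ≠ 0) {R : ℝ} (hR : 0 ≤ R) :
    IntegrableOn (fun w ↦ 1 / (‖w‖ * ‖z - w‖)) (ball 0 R) ∧
    (∫ w in ball 0 R, 1 / (‖w‖ * ‖z - w‖)) =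
      (∫ t in 0..2 * π, log (R - ‖z‖ * cos t + √(R ^ 2 + ‖z‖ ^ 2 - 2 * R * ‖z‖ * cos t))) -
        2 * π * log ‖z‖ + 2 * π * log 2 ∧
    (∫ w in ball 0 R, 1 / (‖w‖ * ‖z - w‖)) ≤
      2 * π * log (4 * (R + ‖z‖)) - 2 * π * log ‖z‖ := by
  have hr : 0 < ‖z‖ := norm_pos_iff.2 hz
  have hrect : MeasurableSet (Ioo 0 R ×ˢ Ioo (-π) π) := measurableSet_Ioo.prod measurableSet_Ioo
  have hval := setIntegral_inv_cosineDist hr hR z.arg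
  rw [← setIntegral_congr_fun hrect fun p hp ↦ smul_one_div_norm_mul_norm_sub z hp.1.1,
    ← setIntegral_ball_eq_polar fun w ↦ 1 / (‖w‖ * ‖z - w‖)] at hval
  refine ⟨?_, hval, ?_⟩
  · rw [integrableOn_ball_iff_polar (Measurable.stronglyMeasurable (by fun_prop)),
      integrableOn_congr_fun (fun p hp ↦ smul_one_div_norm_mul_norm_sub z hp.1.1) hrect]
    exact integrableOn_inv_cosineDist hr hR z.arg
  · have hlog : log (4 * (R + ‖z‖)) = log (2 * (R + ‖z‖)) + log 2 := by
      rw [← log_mul (by positivity) two_ne_zero]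
      ring_nf
    rw [hval, hlog]
    linarith [integral_invDistPrimitive_cos_le hr hR]

/-- Lemma 2.5: evaluation and bound for `∫_𝔻 dA(w)/(|w||z-w|)`. -/
theorem stmt9 (z : ℂ) (hz : z ∈ ball (0:ℂ) 1) (hz0 : z ≠ 0) :
    (∫ w in ball (0:ℂ) 1, 1 / (‖w‖ * ‖z - w‖)) =
      (∫ t in (0:ℝ)..(2 * Real.pi),
        Real.log (1 - ‖z‖ * Real.cos t +
          Real.sqrt (1 + ‖z‖ ^ 2 - 2 * ‖z‖ * Real.cos t))) -
        2 * Real.pi * Real.log ‖z‖ + 2 * Real.pi * Real.log 2 ∧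
    (∫ w in ball (0:ℂ) 1, 1 / (‖w‖ * ‖z - w‖)) ≤
      2 * Real.pi * Real.log (4 * (1 + ‖z‖)) - 2 * Real.pi * Real.log ‖z‖ := by
  simpa only [one_pow, mul_one] using (stmt9_general hz0 zero_le_one).2
end
end

section
/- Let M₂ > 0 and M₁ ≥ 0 be constants and define, for x ∈ (0,1), φ(x) = 1/((4/π)M₂ + (2/3)M₁) − (4M₂/π)·x(2−x)/(1−x)² − 2M₁·[log(4(1+x)) − log x]·(2+x)x. Then φ is continuous and strictly decreasing on (0,1), lim_{x→0⁺} φ(x) = 1/((4/π)M₂ + (2/3)M₁) > 0, lim_{x→1⁻} φ(x) = −∞, and there is a unique x₀ ∈ (0,1) with φ(x₀) = 0. -/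
/-!
Up to nonnegative factors, `φ` is a constant minus two terms. The first is
`x(2-x)/(1-x)² = (1-x)⁻² - 1`, which increases strictly to `∞` at `1`. The second is
`(2+x) · x log (4(1+x)/x)` with `x log (4(1+x)/x) = x log 4 + log ((1+1/x)^x)`; both factors are
nonnegative and increasing, the monotonicity of `(1+1/x)^x` being Bernoulli's inequality. The
singularity of the second term at `0` is removable, because `x log x → 0`.
-/

open Metric MeasureTheory Set Filter

noncomputable section

open scoped Topology

lemma existsUnique_mem_Ioo_eq_of_strictAntiOn {α β : Type*}
    [ConditionallyCompleteLinearOrder α] [TopologicalSpace α] [OrderTopology α] [DenselyOrdered α]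
    [LinearOrder β] [TopologicalSpace β] [OrderClosedTopology β]
    {f : α → β} {a b : α} {l v : β} (hab : a < b) (hcont : ContinuousOn f (Ioo a b))
    (hanti : StrictAntiOn f (Ioo a b)) (ha : Tendsto f (𝓝[>] a) (𝓝 l))
    (hb : Tendsto f (𝓝[<] b) atBot) (hv : v < l) : ∃! x, x ∈ Ioo a b ∧ f x = v := by
  have := nhdsGT_neBot_of_exists_gt ⟨b, hab⟩
  have := nhdsLT_neBot_of_exists_lt ⟨a, hab⟩
  obtain ⟨x, hx, hfx⟩ := isPreconnected_Ioo.intermediate_value_Iio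
    (le_principal_iff.2 (Ioo_mem_nhdsLT hab)) (le_principal_iff.2 (Ioo_mem_nhdsGT hab))
    hcont hb ha hv
  exact ⟨x, ⟨hx, hfx⟩, fun y hy => hanti.injOn hy.1 hx (hy.2.trans hfx.symm)⟩

/-- The summand of `φ` with a double pole at `1`, where division by zero gives it the value `0`. -/
def poleTerm (x : ℝ) : ℝ :=
  x * (2 - x) / (1 - x) ^ 2

lemma poleTerm_eq_inv_sub_one {x : ℝ} (hx : x ≠ 1) : poleTerm x = ((1 - x) ^ 2)⁻¹ - 1 := by
  have : 1 - x ≠ 0 := sub_ne_zero.2 hx.symm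
  rw [poleTerm]
  field_simp
  ring

lemma continuousAt_poleTerm {x : ℝ} (hx : x ≠ 1) : ContinuousAt poleTerm x :=
  ContinuousAt.div (by fun_prop) (by fun_prop) (pow_ne_zero 2 (sub_ne_zero.2 hx.symm))

lemma strictMonoOn_poleTerm : StrictMonoOn poleTerm (Iio 1) := by
  intro x hx y hy hxy
  rw [poleTerm_eq_inv_sub_one hx.ne, poleTerm_eq_inv_sub_one hy.ne]
  have hy' : 0 < 1 - y := sub_pos.2 hy
  gcongr

lemma tendsto_poleTerm_nhdsNE_one : Tendsto poleTerm (𝓝[≠] 1) atTop := by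
  have hsq : Tendsto (fun x : ℝ => (1 - x) ^ 2) (𝓝[≠] 1) (𝓝[>] 0) := by
    refine tendsto_nhdsWithin_iff.2 ⟨?_, ?_⟩
    · exact (Continuous.tendsto' (by fun_prop) _ _ (by norm_num)).mono_left nhdsWithin_le_nhds
    · filter_upwards [self_mem_nhdsWithin] with x hx
      exact sq_pos_of_ne_zero (sub_ne_zero.2 (Ne.symm hx))
  refine (tendsto_atTop_add_const_right _ (-1) hsq.inv_tendsto_nhdsGT_zero).congr' ?_
  filter_upwards [self_mem_nhdsWithin] with x hx
  exact (poleTerm_eq_inv_sub_one hx).symm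

/-- The logarithmic summand of `φ`, with `c` in place of the constant `4`. At `0` the factor `x`
makes the value `Real.log 0` irrelevant. -/
def logTerm (c x : ℝ) : ℝ :=
  (Real.log (c * (1 + x)) - Real.log x) * ((2 + x) * x)

lemma continuousAt_logTerm {c x : ℝ} (hc : c ≠ 0) (hx : 1 + x ≠ 0) :
    ContinuousAt (logTerm c) x := by
  have hlog : ContinuousAt (fun x : ℝ => Real.log (c * (1 + x))) x :=
    ContinuousAt.log (by fun_prop) (mul_ne_zero hc hx)
  have hmul : ContinuousAt (fun x : ℝ => x * Real.log x) x :=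
    Real.continuous_mul_log.continuousAt
  have heq : logTerm c = fun x =>
      (2 + x) * (x * Real.log (c * (1 + x)) - x * Real.log x) := by
    funext x
    rw [logTerm]
    ring
  rw [heq]
  fun_prop

lemma monotoneOn_mul_log_one_add_div {t : ℝ} (ht : 0 ≤ t) :
    MonotoneOn (fun x => x * Real.log (1 + t / x)) (Ioi 0) := by
  intro x hx y hy hxy
  rw [mem_Ioi] at hx hy
  have bernoulli : 1 + t / x ≤ (1 + t / y) ^ (y / x) := by
    calc 1 + t / x = 1 + y / x * (t / y) := by field_simp
      _ ≤ (1 + t / y) ^ (y / x) :=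
        one_add_mul_self_le_rpow_one_add (by linarith [div_nonneg ht hy.le])
          ((one_le_div hx).2 hxy)
  calc x * Real.log (1 + t / x) ≤ x * Real.log ((1 + t / y) ^ (y / x)) := by gcongr
    _ = y * Real.log (1 + t / y) := by
      rw [Real.log_rpow (by positivity)]
      field_simp

lemma monotoneOn_logTerm {c : ℝ} (hc : 1 ≤ c) : MonotoneOn (logTerm c) (Ioi 0) := by
  have hlog : 0 ≤ Real.log c := Real.log_nonneg hc
  have hlogMono : MonotoneOn (fun x => x * Real.log c + x * Real.log (1 + 1 / x)) (Ioi 0) :=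
    (monotone_mul_right_of_nonneg hlog).monotoneOn _ |>.add
      (monotoneOn_mul_log_one_add_div zero_le_one)
  have hlinMono : MonotoneOn (fun x : ℝ => 2 + x) (Ioi 0) :=
    (monotone_id.const_add 2).monotoneOn _
  refine (hlinMono.mul hlogMono ?_ ?_).congr ?_
  · intro x hx
    rw [mem_Ioi] at hx
    positivity
  · intro x hx
    rw [mem_Ioi] at hx
    have : 0 ≤ Real.log (1 + 1 / x) := Real.log_nonneg (by simp [hx.le])
    positivity
  · intro x hx
    rw [mem_Ioi] at hx
    have hsplit : 1 + 1 / x = (1 + x) / x := by field_simp; ring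
    simp only [logTerm, Pi.mul_apply, hsplit]
    rw [Real.log_mul (by positivity) (by positivity), Real.log_div (by positivity) hx.ne']
    ring

/-- The function `φ` with free coefficients: `C` is its value at `0`, and `A` and `B` weigh the
polar and the logarithmic term. -/
def phi (c A B C x : ℝ) : ℝ :=
  C - A * poleTerm x - B * logTerm c x

section phi

variable {c A B : ℝ} (C : ℝ)

lemma phi_zero (c A B : ℝ) : phi c A B C 0 = C := by
  simp [phi, poleTerm, logTerm]

lemma continuousAt_phi {x : ℝ} (hc : c ≠ 0) (hx : 1 + x ≠ 0) (hx' : x ≠ 1) :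
    ContinuousAt (phi c A B C) x :=
  (continuousAt_const.sub ((continuousAt_poleTerm hx').const_mul A)).sub
    ((continuousAt_logTerm hc hx).const_mul B)

lemma strictAntiOn_phi (hc : 1 ≤ c) (hA : 0 < A) (hB : 0 ≤ B) :
    StrictAntiOn (phi c A B C) (Ioo 0 1) := by
  intro x hx y hy hxy
  have hpole : A * poleTerm x < A * poleTerm y :=
    mul_lt_mul_of_pos_left (strictMonoOn_poleTerm hx.2 hy.2 hxy) hA
  have hlog : B * logTerm c x ≤ B * logTerm c y :=
    mul_le_mul_of_nonneg_left (monotoneOn_logTerm hc hx.1 hy.1 hxy.le) hB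
  rw [phi, phi]
  linarith

lemma tendsto_phi_nhdsNE_one (hc : c ≠ 0) (hA : 0 < A) :
    Tendsto (phi c A B C) (𝓝[≠] 1) atBot := by
  have hpole : Tendsto (fun x => -(A * poleTerm x)) (𝓝[≠] 1) atBot :=
    tendsto_neg_atTop_atBot.comp (tendsto_poleTerm_nhdsNE_one.const_mul_atTop hA)
  have hlog : ContinuousAt (fun x => C - B * logTerm c x) 1 :=
    continuousAt_const.sub ((continuousAt_logTerm hc (by norm_num)).const_mul B)
  refine ((hlog.tendsto.mono_left nhdsWithin_le_nhds).add_atBot hpole).congr fun x => ?_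
  rw [phi]
  ring

end phi

/-- Lemma 2.7: properties of the function `φ`. -/
theorem stmt10 (M₁ M₂ : ℝ) (hM₁ : 0 ≤ M₁) (hM₂ : 0 < M₂) (φ : ℝ → ℝ)
    (hφ : ∀ x : ℝ, φ x = 1 / (4 / Real.pi * M₂ + 2 / 3 * M₁) -
        4 * M₂ / Real.pi * (x * (2 - x) / (1 - x) ^ 2) -
        2 * M₁ * (Real.log (4 * (1 + x)) - Real.log x) * ((2 + x) * x)) :
    ContinuousOn φ (Set.Ioo 0 1) ∧
    StrictAntiOn φ (Set.Ioo 0 1) ∧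
    Filter.Tendsto φ (nhdsWithin 0 (Set.Ioi 0))
      (nhds (1 / (4 / Real.pi * M₂ + 2 / 3 * M₁))) ∧
    0 < 1 / (4 / Real.pi * M₂ + 2 / 3 * M₁) ∧
    Filter.Tendsto φ (nhdsWithin 1 (Set.Iio 1)) Filter.atBot ∧
    ∃! x₀ : ℝ, x₀ ∈ Set.Ioo (0:ℝ) 1 ∧ φ x₀ = 0 := by
  have hC : 0 < 1 / (4 / Real.pi * M₂ + 2 / 3 * M₁) := by positivity
  have hA : 0 < 4 * M₂ / Real.pi := by positivity
  generalize 1 / (4 / Real.pi * M₂ + 2 / 3 * M₁) = C at hφ hC ⊢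
  obtain rfl : φ = phi 4 (4 * M₂ / Real.pi) (2 * M₁) C := by
    funext x
    rw [hφ, phi, poleTerm, logTerm, mul_assoc (2 * M₁)]
  have hcont : ∀ x ∈ Ico (0 : ℝ) 1, ContinuousAt (phi 4 (4 * M₂ / Real.pi) (2 * M₁) C) x :=
    fun x hx => continuousAt_phi C four_ne_zero (by linarith [hx.1]) hx.2.ne
  have hcontOn := continuousOn_of_forall_continuousAt fun x hx => hcont x (Ioo_subset_Ico_self hx)
  have hanti := strictAntiOn_phi C (c := 4) (by norm_num) hA (mul_nonneg zero_le_two hM₁)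
  have hzero := (hcont 0 ⟨le_rfl, one_pos⟩).tendsto.mono_left
    (nhdsWithin_le_nhds (s := Ioi 0))
  rw [phi_zero] at hzero
  have hone := (tendsto_phi_nhdsNE_one C (B := 2 * M₁) four_ne_zero hA).mono_left
    (nhdsLT_le_nhdsNE 1)
  exact ⟨hcontOn, hanti, hzero, hC, hone,
    existsUnique_mem_Ioo_eq_of_strictAntiOn one_pos hcontOn hanti hzero hone hC⟩
end
end
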